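/- arXiv:2510.27387 — 5 statements merged into one kernel-verified Lean document; each statement's English description precedes it below -/
import Mathlib

section
/- Let K be a field and let U be an s-dimensional linear subspace of K^n. Then there exists a vector a = (a_1, ..., a_n) ∈ U having at least s nonzero coordinates, i.e., |{i ∈ {1,...,n} : a_i ≠ 0}| ≥ s. -/
open Module

/-!
The coordinate functionals, restricted to `U`, separate the points of `U`. A maximal linearly
independent subfamily `κ` of them has the same span, hence still separates points, so the projection
`U → K^κ` is injective. It has at most `dim U* = dim U` members, so this projection is bijective,
and the preimage of the all-ones vector is nonzero at each of the `dim U` chosen coordinates.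
-/

/-- **Support of a vector in a subspace.**  If `U` is an `s`-dimensional linear subspace of
`K^n` over a field `K`, then some vector `a ∈ U` has at least `s` nonzero coordinates. -/
theorem exists_vector_with_large_support {K : Type} [Field K] {n s : ℕ}
    (U : Submodule K (Fin n → K)) (hU : Module.finrank K U = s) :
    ∃ a ∈ U, s ≤ Nat.card {i : Fin n // a i ≠ 0} := by
  let v : Fin n → Dual K U := fun i => (LinearMap.proj i).comp U.subtype
  obtain ⟨κ, c, hc, hspan, hli⟩ := exists_linearIndependent' K v
  have : Finite κ := Finite.of_injective c hc
  have : Fintype κ := Fintype.ofFinite κ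
  let Φ : U →ₗ[K] (κ → K) := LinearMap.pi fun k => v (c k)
  have hinj : Function.Injective Φ := by
    rw [← LinearMap.ker_eq_bot, LinearMap.ker_eq_bot']
    intro x hx
    -- The functionals vanishing at `x` form a subspace containing every `v (c k)`.
    have hle : Submodule.span K (Set.range (v ∘ c)) ≤ LinearMap.ker (Dual.eval K U x) := by
      rw [Submodule.span_le]
      rintro _ ⟨k, rfl⟩
      exact congrFun hx k
    rw [hspan] at hle
    ext i
    exact hle (Submodule.subset_span ⟨i, rfl⟩)
  have hle : finrank K U ≤ Fintype.card κ := by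
    simpa using LinearMap.finrank_le_finrank_of_injective hinj
  have hge : Fintype.card κ ≤ finrank K U := by
    simpa [Subspace.dual_finrank_eq] using hli.fintype_card_le_finrank
  have hsurj : Function.Surjective Φ :=
    (LinearMap.injective_iff_surjective_of_finrank_eq_finrank
      (by simpa using le_antisymm hle hge)).1 hinj
  obtain ⟨x, hx⟩ := hsurj 1
  have hone : ∀ k, (x : Fin n → K) (c k) = 1 := fun k => congrFun hx k
  refine ⟨x, x.2, ?_⟩
  rw [← hU]
  refine hle.trans ?_
  rw [← Nat.card_eq_fintype_card]
  exact Nat.card_le_card_of_injective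
    (fun k => (⟨c k, by simp [hone k]⟩ : {i : Fin n // (x : Fin n → K) i ≠ 0}))
    fun k l h => hc (congrArg Subtype.val h)
end

section
/- Let K be a field and let n be a positive integer. Let M_n : K^{n×n} × K^{n×n} → K^{n×n} be the matrix multiplication map, M_n(A, B) = AB. Then α(M_n) = ⌊n/2⌋·n and β(M_n) = n. -/
/-!
Both values come from a dimension count and an explicit pair of spans of matrix units.

For `α`, suppose `U₁ * U₂ = 0` and let `R ⊆ Kⁿ` be the sum of the ranges of the matrices in `U₂`,
of dimension `r`.  Every matrix in `U₂` maps into `R` and every matrix in `U₁` kills `R`, so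
`dim U₂ ≤ n * r` and `dim U₁ ≤ (n - r) * n`; as one of `r`, `n - r` is at most `⌊n/2⌋`, the bound
follows (`finrank_le_of_mul_eq_zero`).  Equality holds for the matrices supported on the first
`⌊n/2⌋` columns and those supported on the last `⌊n/2⌋` rows.

For `β`, injectivity forces `s * s ≤ n * n`.  Equality holds for the matrices supported on one
column and those supported on the row of the same index: their products contain all matrix
units, so the map from the tensor product is onto, and it is bijective by dimension.
-/

open Module
open scoped TensorProduct

section Defs

variable {K : Type} [Field K] {d : ℕ} {V : Fin d → Type} {W : Type}
  [∀ i, AddCommGroup (V i)] [∀ i, Module K (V i)]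
  [AddCommGroup W] [Module K W]

/-- The isotropy index `α(F)` of a multilinear map `F : V₁ × ⋯ × V_d → W`: the largest `s`
such that there are subspaces `Uᵢ ⊆ Vᵢ`, all of dimension `s`, with `F` vanishing identically
on `U₁ × ⋯ × U_d`. -/
noncomputable def isoIndex (F : MultilinearMap K V W) : ℕ :=
  sSup {s : ℕ | ∃ U : ∀ i, Submodule K (V i),
    (∀ i, Module.finrank K (U i) = s) ∧
    ∀ v : ∀ i, V i, (∀ i, v i ∈ U i) → F v = 0}

/-- The completeness index `β(F)` of a multilinear map `F : V₁ × ⋯ × V_d → W`: the largest `s`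
such that there are subspaces `Uᵢ ⊆ Vᵢ`, all of dimension `s`, for which the restriction of `F`
to `U₁ × ⋯ × U_d`, viewed as a linear map `U₁ ⊗ ⋯ ⊗ U_d → W`, is injective. -/
noncomputable def compIndex (F : MultilinearMap K V W) : ℕ :=
  sSup {s : ℕ | ∃ U : ∀ i, Submodule K (V i),
    (∀ i, Module.finrank K (U i) = s) ∧
    Function.Injective
      (PiTensorProduct.lift (F.compLinearMap fun i => (U i).subtype))}

end Defs

/-- Distinct matrix units are linearly independent. -/
lemma finrank_span_single {K : Type} [Field K] {n : ℕ} {ι : Type} [Fintype ι]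
    (f : ι → Fin n × Fin n) (hf : Function.Injective f) :
    finrank K (Submodule.span K (Set.range fun x =>
      (Matrix.single (f x).1 (f x).2 1 : Matrix (Fin n) (Fin n) K))) = Fintype.card ι := by
  apply finrank_span_eq_card
  have h := (Matrix.stdBasis K (Fin n) (Fin n)).linearIndependent.comp f hf
  convert h using 1
  funext x
  exact (Matrix.stdBasis_eq_single K (f x).1 (f x).2).symm

lemma finrank_le_of_mul_eq_zero {K : Type} [Field K] {n s : ℕ}
    (U₁ U₂ : Submodule K (Matrix (Fin n) (Fin n) K))
    (h₁ : finrank K U₁ = s) (h₂ : finrank K U₂ = s)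
    (h : ∀ A ∈ U₁, ∀ B ∈ U₂, A * B = 0) : s ≤ n / 2 * n := by
  let R : Submodule K (Fin n → K) := ⨆ B : U₂, LinearMap.range (Matrix.toLin' B.1)
  have hR : finrank K ((Fin n → K) ⧸ R) + finrank K R = n := by
    simpa using R.finrank_quotient_add_finrank
  have hU₂ : U₂.map (Matrix.toLin' : _ ≃ₗ[K] _).toLinearMap ≤
      LinearMap.range (LinearMap.compRight K R.subtype : ((Fin n → K) →ₗ[K] R) →ₗ[K] _) := by
    rintro _ ⟨B, hB, rfl⟩
    refine ⟨(Matrix.toLin' B).codRestrict R fun v => ?_, by ext; rfl⟩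
    exact Submodule.mem_iSup_of_mem (p := fun B : U₂ => LinearMap.range (Matrix.toLin' B.1))
      ⟨B, hB⟩ ⟨v, rfl⟩
  have hU₁ : U₁.map (Matrix.toLin' : _ ≃ₗ[K] _).toLinearMap ≤
      LinearMap.range (LinearMap.lcomp K (Fin n → K) R.mkQ) := by
    rintro _ ⟨A, hA, rfl⟩
    refine ⟨R.liftQ (Matrix.toLin' A) ?_, by ext; rfl⟩
    refine iSup_le fun B => ?_
    rintro _ ⟨v, rfl⟩
    simp [h A hA B.1 B.2]
  have d₂ := (Submodule.finrank_mono hU₂).trans (LinearMap.finrank_range_le _)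
  have d₁ := (Submodule.finrank_mono hU₁).trans (LinearMap.finrank_range_le _)
  rw [LinearEquiv.finrank_map_eq, finrank_linearMap, finrank_fin_fun, h₂] at d₂
  rw [LinearEquiv.finrank_map_eq, finrank_linearMap, finrank_fin_fun, h₁] at d₁
  rcases Nat.lt_or_ge (n / 2) (finrank K R) with hr | hr
  · exact d₁.trans (Nat.mul_le_mul_right _ (by omega))
  · rw [mul_comm] at d₂
    exact d₂.trans (Nat.mul_le_mul_right _ hr)

lemma finrank_piTensorProduct_fin_two {K : Type} [Field K] {V : Fin 2 → Type}
    [∀ i, AddCommGroup (V i)] [∀ i, Module K (V i)] [∀ i, FiniteDimensional K (V i)] :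
    finrank K (⨂[K] i, V i) = finrank K (V 0) * finrank K (V 1) := by
  rw [finrank_eq_card_basis (Basis.piTensorProduct fun i => finBasis K (V i))]
  simp [Fintype.card_pi]

/-- **Indices of matrix multiplication.**  For the matrix multiplication map
`M_n : K^{n×n} × K^{n×n} → K^{n×n}`, `(A, B) ↦ AB`, viewed as a bilinear
(2-multilinear) map, one has `α(M_n) = ⌊n/2⌋·n` and `β(M_n) = n`. -/
theorem indices_of_matrix_multiplication {K : Type} [Field K] (n : ℕ) (hn : 0 < n) :
    isoIndex (MultilinearMap.mkPiAlgebraFin K 2 (Matrix (Fin n) (Fin n) K)) = n / 2 * n ∧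
    compIndex (MultilinearMap.mkPiAlgebraFin K 2 (Matrix (Fin n) (Fin n) K)) = n := by
  constructor
  · refine IsGreatest.csSup_eq ⟨?_, ?_⟩
    · let f₁ : Fin (n / 2) × Fin n → Fin n × Fin n := fun p => (p.2, ⟨p.1, by omega⟩)
      let f₂ : Fin (n / 2) × Fin n → Fin n × Fin n := fun p => (⟨p.1 + (n - n / 2), by omega⟩, p.2)
      have hf₁ : Function.Injective f₁ := by
        rintro ⟨a, b⟩ ⟨c, d⟩ h
        simp only [f₁, Prod.mk.injEq, Fin.ext_iff] at h ⊢
        omega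
      have hf₂ : Function.Injective f₂ := by
        rintro ⟨a, b⟩ ⟨c, d⟩ h
        simp only [f₂, Prod.mk.injEq, Fin.ext_iff] at h ⊢
        omega
      refine ⟨Fin.cons (Submodule.span K (Set.range fun x => Matrix.single (f₁ x).1 (f₁ x).2 1))
        (Fin.cons (Submodule.span K (Set.range fun x => Matrix.single (f₂ x).1 (f₂ x).2 1))
          finZeroElim), ?_, ?_⟩
      · intro i
        fin_cases i
        · exact (finrank_span_single f₁ hf₁).trans (by simp)
        · exact (finrank_span_single f₂ hf₂).trans (by simp)
      · intro v hv
        have h := Submodule.mul_mem_mul (hv 0) (hv 1)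
        simp only [Fin.cons_zero, Fin.cons_one, Submodule.span_mul_span] at h
        have h0 : v 0 * v 1 = 0 := by
          rw [← Submodule.mem_bot K]
          refine Submodule.span_le.2 ?_ h
          rintro _ ⟨_, ⟨x, rfl⟩, _, ⟨y, rfl⟩, rfl⟩
          refine Matrix.single_mul_single_of_ne _ _ _ _ ?_ _
          simp only [f₁, f₂, ne_eq, Fin.ext_iff]
          omega
        simpa [MultilinearMap.mkPiAlgebraFin_apply] using h0
    · rintro s ⟨U, hU, h⟩
      refine finrank_le_of_mul_eq_zero (U 0) (U 1) (hU 0) (hU 1) fun A hA B hB => ?_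
      have := h ![A, B] (by intro i; fin_cases i <;> assumption)
      simpa [MultilinearMap.mkPiAlgebraFin_apply] using this
  · refine IsGreatest.csSup_eq ⟨?_, ?_⟩
    · let f₁ : Fin n → Fin n × Fin n := fun i => (i, ⟨0, hn⟩)
      let f₂ : Fin n → Fin n × Fin n := fun j => (⟨0, hn⟩, j)
      have hf₁ : Function.Injective f₁ := fun a b h => (Prod.mk.inj h).1
      have hf₂ : Function.Injective f₂ := fun a b h => (Prod.mk.inj h).2
      let U : ∀ _ : Fin 2, Submodule K (Matrix (Fin n) (Fin n) K) :=
        Fin.cons (Submodule.span K (Set.range fun x => Matrix.single (f₁ x).1 (f₁ x).2 1))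
        (Fin.cons (Submodule.span K (Set.range fun x => Matrix.single (f₂ x).1 (f₂ x).2 1))
          finZeroElim)
      have hU : ∀ i, finrank K (U i) = n := by
        intro i
        fin_cases i
        · exact (finrank_span_single f₁ hf₁).trans (by simp)
        · exact (finrank_span_single f₂ hf₂).trans (by simp)
      refine ⟨U, hU, ?_⟩
      have : FiniteDimensional K (⨂[K] i, U i) :=
        (Basis.piTensorProduct fun i => finBasis K (U i)).finiteDimensional_of_finite
      have hd : finrank K (⨂[K] i, U i) = finrank K (Matrix (Fin n) (Fin n) K) := by
        rw [finrank_piTensorProduct_fin_two, hU, hU]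
        simp [finrank_matrix]
      refine (LinearMap.injective_iff_surjective_of_finrank_eq_finrank
        (K := K) (V := ⨂[K] i, U i) (V₂ := Matrix (Fin n) (Fin n) K) hd).2 ?_
      rw [← LinearMap.range_eq_top, eq_top_iff, ← (Matrix.stdBasis K (Fin n) (Fin n)).span_eq,
        Submodule.span_le]
      rintro _ ⟨⟨i, j⟩, rfl⟩
      let w : ∀ k, U k := Fin.cons ⟨Matrix.single i ⟨0, hn⟩ 1, Submodule.subset_span ⟨i, rfl⟩⟩
        (Fin.cons ⟨Matrix.single ⟨0, hn⟩ j 1, Submodule.subset_span ⟨j, rfl⟩⟩ finZeroElim)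
      refine ⟨PiTensorProduct.tprod K w, ?_⟩
      have hw : (w 0).1 * (w 1).1 = Matrix.single i j 1 :=
        (Matrix.single_mul_single_same (1 : K) i (⟨0, hn⟩ : Fin n) j 1).trans (by rw [one_mul])
      simpa [MultilinearMap.mkPiAlgebraFin_apply, Matrix.stdBasis_eq_single] using hw
    · rintro s ⟨U, hU, h⟩
      have h' := LinearMap.finrank_le_finrank_of_injective h
      rw [finrank_piTensorProduct_fin_two, hU, hU] at h'
      simp only [finrank_matrix, finrank_self, Fintype.card_fin, mul_one] at h'
      exact Nat.mul_self_le_mul_self_iff.1 h'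
end

section
/- Let R be a polynomial ring over a field and let M = (M_{k,j}) ∈ R^{(m+1)×n} be a matrix satisfying: (a) for each k ∈ {1,...,m+1}, the entries M_{k,1}, ..., M_{k,n} of the k-th row are homogeneous polynomials of the same degree d_k, and d_i < d_{m+1} for every i ∈ {1,...,m}; (b) the first m rows of M are linearly independent over the field of fractions of R; (c) the ideal of R generated by M_{m+1,1}, ..., M_{m+1,n} has height at least m+1. Then M has a nonzero maximal minor, i.e., some (m+1)×(m+1) minor of M is a nonzero element of R. -/
open Module

/-- The height of an ideal: the infimum of the heights of the prime ideals containing it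
(in the poset of prime ideals ordered by inclusion). -/
noncomputable def idealHeight {R : Type*} [CommRing R] (I : Ideal R) : ℕ∞ :=
  ⨅ p ∈ {p : PrimeSpectrum R | I ≤ p.asIdeal}, Order.height p

/-!
Write `R = K[x_0, …, x_{N-1}]`, `F = Frac R`, let `v` be the last row (degree `d`), `A_i` the other
rows (degrees `d_i < d`), and `I = (v_1, …, v_n)`. If every maximal minor vanishes, the rows are
dependent over `F`, hence `v = ∑ c_i A_i` with `c_i ∈ F`. The entries of `v` have no constant term,
so `I` is proper and `m + 1 ≤ ht I ≤ N`.

Put `e_i = d - d_i - 1 ≥ 0`, introduce parameters `s, U_i, T_i` (there are `2m + 1` of them), and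
deform the equations `v_j = 0` to
`V_j = s v_j - ∑ (U_i x_0^{e_i+1} - T_i x_{i+1} x_0^{e_i}) A_ij`,
whose fibre at the parameter value `s = 1, U = T = 0` is `V(I)`. The relation `v = ∑ c_i A_i` shows
that all the `V_j` vanish where `U_i x_0 - T_i x_{i+1} = s c_i / x_0^{e_i}`. This locus has the
rational parametrization
`x ↦ λ x`, `s ↦ s`, `U_i ↦ s b_i + τ_i x_{i+1}`, `T_i ↦ τ_i x_0`, where `b_i = c_i / x_0^{e_i+1}`,
which is the ring homomorphism `familyHom` into `F[τ][s][λ]`; the factor `λ` is harmless since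
`V_j` is homogeneous of degree `d` in `x`. Let `D` be the image of `familyHom`.

* The elements `x_k, T_i, s` of `D` are algebraically independent, so every maximal ideal of the
  finitely generated domain `D` has height at least `N + m + 1`
  (`familyHom_injective_aeval`, `card_le_height_of_algebraicIndependent`).
* Setting `λ = 0` leaves the parameters algebraically independent, which forces the point
  `x = 0, s = 1, U = T = 0` to lie on `Spec D` (`familyHom_ker_le`).
* Imposing `s = 1, U = T = 0` on `Spec D` costs at most `2m + 1` in dimension and yields a closed
  subscheme of `Spec R/I`, which has dimension at most `N - m - 1`.

Together `N + m + 1 ≤ (N - m - 1) + (2m + 1) = N + m`, a contradiction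
(`relation_contradiction`).
-/

/-! ### Heights and dimensions -/

lemma height_maximal_mvPolynomial {K : Type} [Field K] (s : ℕ)
    (p : Ideal (MvPolynomial (Fin s) K)) [hp : p.IsMaximal] : (s : ℕ∞) ≤ p.height := by
  induction s with
  | zero => simp
  | succ s ih =>
    let e := (MvPolynomial.finSuccEquiv K s).toRingEquiv
    have hP : (p.map e).IsMaximal := Ideal.map_isMaximal_of_equiv e
    have hq : ((p.map e).comap (Polynomial.C : MvPolynomial (Fin s) K →+* _)).IsMaximal :=
      Polynomial.isMaximal_comap_C_of_isJacobsonRing _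
    have : (p.map e).LiesOver ((p.map e).comap (Polynomial.C : MvPolynomial (Fin s) K →+* _)) :=
      ⟨rfl⟩
    have h := Polynomial.height_eq_height_add_one
      ((p.map e).comap (Polynomial.C : MvPolynomial (Fin s) K →+* _)) (p.map e)
    rw [RingEquiv.height_map] at h
    rw [h]
    push_cast
    gcongr
    exact ih _

/-- In a finitely generated domain over a field every maximal ideal has height equal to the
transcendence degree; only the lower bound is recorded. The proof is Noether normalization with
going down. -/
lemma card_le_height_of_algebraicIndependent {K D ι : Type} [Field K] [CommRing D] [IsDomain D]
    [Algebra K D] [Algebra.FiniteType K D] [Fintype ι] {z : ι → D}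
    (hz : AlgebraicIndependent K z) (n : Ideal D) [hn : n.IsMaximal] :
    (Fintype.card ι : ℕ∞) ≤ n.height := by
  obtain ⟨s, g, hinj, hfin⟩ := exists_finite_inj_algHom_of_fg K D
  algebraize [g.toRingHom]
  have hfs : FaithfulSMul (MvPolynomial (Fin s) K) D :=
    (faithfulSMul_iff_algebraMap_injective _ _).2 hinj
  have : Module.Finite (MvPolynomial (Fin s) K) D := hfin
  have : IsNoetherianRing D := Algebra.FiniteType.isNoetherianRing K D
  have hcard : Fintype.card ι ≤ s := by
    have h1 := hz.cardinalMk_le_trdeg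
    have h2 := trdeg_add_eq K (MvPolynomial (Fin s) K) (A := D)
    rw [trdeg_eq_zero (R := MvPolynomial (Fin s) K), add_zero, MvPolynomial.trdeg_of_isDomain] at h2
    rw [← h2] at h1
    simpa using h1
  have hmax : (n.under (MvPolynomial (Fin s) K)).IsMaximal :=
    Ideal.isMaximal_comap_of_isIntegral_of_isMaximal n
  have h3 := Ideal.height_eq_height_add_of_liesOver_of_hasGoingDown
    (n.under (MvPolynomial (Fin s) K)) n
  calc (Fintype.card ι : ℕ∞) ≤ s := by exact_mod_cast hcard
    _ ≤ (n.under (MvPolynomial (Fin s) K)).height := height_maximal_mvPolynomial s _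
    _ ≤ n.height := by rw [h3]; exact le_self_add

/-- A chain of primes above `I` starts at height at least `k`, so it has length at most
`dim R - k`. -/
lemma ringKrullDim_quotient_le_of_le_idealHeight {R : Type*} [CommRing R] (I : Ideal R)
    (k r : ℕ) (hk : (k : ℕ∞) ≤ idealHeight I) (hN : ringKrullDim R = (k + r : ℕ)) :
    ringKrullDim (R ⧸ I) ≤ r := by
  rw [ringKrullDim_quotient]
  refine iSup_le fun l => ?_
  have key : ∀ i : ℕ, ∀ hi : i < l.length + 1,
      ((k + i : ℕ) : ℕ∞) ≤ Order.height ((l ⟨i, hi⟩ : PrimeSpectrum R)) := by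
    intro i
    induction i with
    | zero =>
      intro hi
      refine hk.trans (iInf₂_le _ ?_)
      exact (l ⟨0, hi⟩).2
    | succ i ih =>
      intro hi
      have h1 := ih (by omega)
      have hlt : l ⟨i, by omega⟩ < l ⟨i + 1, hi⟩ := l.strictMono (by simp)
      have h2 := Order.height_add_one_le (a := (l ⟨i, by omega⟩ : PrimeSpectrum R))
        (b := (l ⟨i + 1, hi⟩ : PrimeSpectrum R)) hlt
      calc ((k + (i + 1) : ℕ) : ℕ∞) = ((k + i : ℕ) : ℕ∞) + 1 := by push_cast; ring
        _ ≤ _ := by gcongr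
        _ ≤ _ := h2
  have h3 := key l.length (by omega)
  have h4 := Order.height_le_krullDim ((l ⟨l.length, by omega⟩ : PrimeSpectrum R))
  rw [show Order.krullDim (PrimeSpectrum R) = (k + r : ℕ) from hN] at h4
  have h5 : ((k + l.length : ℕ) : WithBot ℕ∞) ≤ ((k + r : ℕ) : WithBot ℕ∞) :=
    le_trans (by exact_mod_cast h3) h4
  have h6 : k + l.length ≤ k + r := by exact_mod_cast h5
  exact_mod_cast (by omega : l.length ≤ r)

/-! ### Minors and linear independence -/

lemma exists_minor_of_linearIndependent {F : Type*} [Field F] {k n : ℕ}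
    (A : Matrix (Fin k) (Fin n) F) (hA : LinearIndependent F (fun i => A i)) :
    ∃ cols : Fin k → Fin n, Function.Injective cols ∧ (A.submatrix id cols).det ≠ 0 := by
  have hspan : Submodule.span F (Set.range A.col) = ⊤ := by
    apply Submodule.eq_top_of_finrank_eq
    rw [← Matrix.rank_eq_finrank_span_cols, LinearIndependent.rank_matrix hA]
    simp
  obtain ⟨b, hb, hbs, hbl⟩ := exists_linearIndependent F (Set.range A.col)
  rw [hspan] at hbs
  let B := Basis.mk hbl (by simpa using hbs.ge)
  have : Fintype b := FiniteDimensional.fintypeBasisIndex B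
  have hc : Fintype.card b = k := by
    have := Module.finrank_eq_card_basis B; simpa using this.symm
  let e : Fin k ≃ b := (Fintype.equivFinOfCardEq hc).symm
  choose f hf using fun i => hb (e i).2
  have hlin : LinearIndependent F (fun i => (A.submatrix id f).transpose i) := by
    have : (fun i => (A.submatrix id f).transpose i) = (fun x : b => (x : Fin k → F)) ∘ e := by
      funext i; rw [Function.comp, ← hf i]; rfl
    rw [this]
    exact hbl.comp _ e.injective
  refine ⟨f, ?_, ?_⟩
  · intro i j hij
    apply hlin.injective
    funext l
    simp [hij]
  · have := (Matrix.linearIndependent_rows_iff_isUnit (A := (A.submatrix id f).transpose)).1 hlin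
    rw [Matrix.isUnit_iff_isUnit_det, Matrix.det_transpose] at this
    exact this.ne_zero

/-! ### Injectivity of substitutions -/

/-- A homomorphism `K[τ, t] → B[X]` with `t ↦ X` is injective as soon as its reduction
`K[τ] → B` modulo `t` and `X` is: a nonzero element of the kernel could be divided by the highest
power of `t` it contains, leaving an element whose reduction is nonzero. -/
lemma injective_of_X_adic {K B τ : Type*} [Field K] [CommRing B] [IsDomain B] [Algebra K B]
    (θ : MvPolynomial (Option τ) K →ₐ[K] Polynomial B)
    (hX : θ (MvPolynomial.X none) = Polynomial.X)
    (h0 : Function.Injective fun f : MvPolynomial τ K =>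
      (θ (MvPolynomial.rename some f)).eval 0) :
    Function.Injective θ := by
  let e := MvPolynomial.optionEquivLeft K τ
  have he : ∀ f : MvPolynomial τ K, e.symm (Polynomial.C f) = MvPolynomial.rename some f := by
    intro f
    rw [AlgEquiv.symm_apply_eq, MvPolynomial.optionEquivLeft_apply, MvPolynomial.aeval_rename]
    induction f using MvPolynomial.induction_on with
    | C a => simp
    | add p q hp hq => simp [hp, hq]
    | mul_X p i hp => rw [map_mul, map_mul, hp]; simp
  have heX : e.symm Polynomial.X = MvPolynomial.X none := by
    rw [AlgEquiv.symm_apply_eq]; simp [e]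
  rw [injective_iff_map_eq_zero]
  intro f hf
  by_contra hne
  have hg : e f ≠ 0 := by simpa using hne
  obtain ⟨g, hg1, hg2⟩ := Polynomial.exists_eq_pow_rootMultiplicity_mul_and_not_dvd (e f) hg 0
  rw [map_zero, sub_zero] at hg1 hg2
  have hff : f = MvPolynomial.X none ^ ((e f).rootMultiplicity 0) * e.symm g := by
    apply e.injective
    rw [map_mul, AlgEquiv.apply_symm_apply, map_pow, ← heX, AlgEquiv.apply_symm_apply]
    exact hg1
  have hθg : θ (e.symm g) = 0 := by
    rw [hff, map_mul, map_pow, hX] at hf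
    exact (mul_eq_zero.1 hf).resolve_left (pow_ne_zero _ Polynomial.X_ne_zero)
  have hdec : g = Polynomial.X * g.divX + Polynomial.C (g.coeff 0) := by
    rw [mul_comm, Polynomial.divX_mul_X_add]
  rw [hdec, map_add, map_mul, heX, he, map_add, map_mul, hX] at hθg
  have h1 := congrArg (Polynomial.eval 0) hθg
  simp only [Polynomial.eval_add, Polynomial.eval_mul, Polynomial.eval_X, zero_mul, zero_add,
    Polynomial.eval_zero] at h1
  have h2 : g.coeff 0 = 0 := h0 (by simpa using h1)
  exact hg2 (Polynomial.X_dvd_iff.2 h2)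

/-- The substitution `y_a ↦ z_{w(a)} y_a`, `z_b ↦ z_b` is injective, because it is undone over the
fraction field by `y_a ↦ y_a / z_{w(a)}`. -/
lemma injective_mul_var {K α β : Type*} [Field K] (w : α → β) :
    Function.Injective (MvPolynomial.aeval (R := K) (Sum.elim
      (fun a => MvPolynomial.X (Sum.inr (w a)) * MvPolynomial.X (Sum.inl a))
      (fun b => MvPolynomial.X (Sum.inr b)) : α ⊕ β → MvPolynomial (α ⊕ β) K)) := by
  let F := FractionRing (MvPolynomial (α ⊕ β) K)
  let γ : MvPolynomial (α ⊕ β) K →ₐ[K] F := MvPolynomial.aeval (Sum.elim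
    (fun a => algebraMap (MvPolynomial (α ⊕ β) K) F (MvPolynomial.X (Sum.inl a)) /
      algebraMap (MvPolynomial (α ⊕ β) K) F (MvPolynomial.X (Sum.inr (w a))))
    (fun b => algebraMap (MvPolynomial (α ⊕ β) K) F (MvPolynomial.X (Sum.inr b))))
  apply Function.Injective.of_comp (f := γ)
  rw [← AlgHom.coe_comp]
  have : γ.comp (MvPolynomial.aeval (R := K) (Sum.elim
      (fun a => MvPolynomial.X (Sum.inr (w a)) * MvPolynomial.X (Sum.inl a))
      (fun b => MvPolynomial.X (Sum.inr b)) : α ⊕ β → MvPolynomial (α ⊕ β) K))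
      = IsScalarTower.toAlgHom K (MvPolynomial (α ⊕ β) K) F := by
    apply MvPolynomial.algHom_ext
    rintro (a | b)
    · have hne : algebraMap (MvPolynomial (α ⊕ β) K) F (MvPolynomial.X (R := K) (Sum.inr (w a) : α ⊕ β)) ≠ 0 := by
        simp
      simp [γ]
      exact mul_div_cancel₀ _ hne
    · simp [γ]
  rw [this]
  exact IsFractionRing.injective (MvPolynomial (α ⊕ β) K) F

/-- The natural map `K[τ, x] → F[τ]` is injective, where `F = Frac K[x]`. -/
lemma injective_sum_fraction {K F α β : Type*} [Field K] [Field F]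
    [Algebra (MvPolynomial β K) F] [IsFractionRing (MvPolynomial β K) F] [Algebra K F]
    [IsScalarTower K (MvPolynomial β K) F] :
    Function.Injective (MvPolynomial.aeval (R := K) (Sum.elim
      (fun a => MvPolynomial.X a)
      (fun b => MvPolynomial.C (algebraMap (MvPolynomial β K) F (MvPolynomial.X b))) :
        α ⊕ β → MvPolynomial α F)) := by
  have : (MvPolynomial.aeval (R := K) (Sum.elim
      (fun a => MvPolynomial.X a)
      (fun b => MvPolynomial.C (algebraMap (MvPolynomial β K) F (MvPolynomial.X b))) :
        α ⊕ β → MvPolynomial α F)) =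
      (MvPolynomial.mapAlgHom (IsScalarTower.toAlgHom K (MvPolynomial β K)
        F)).comp
      (MvPolynomial.sumAlgEquiv K α β).toAlgHom := by
    apply MvPolynomial.algHom_ext
    rintro (a | b)
    · simp
    · simp
  rw [this, AlgHom.coe_comp]
  refine Function.Injective.comp ?_ (MvPolynomial.sumAlgEquiv K α β).injective
  exact MvPolynomial.map_injective _ (IsFractionRing.injective (MvPolynomial β K) F)

/-! ### The parametrized family -/

open MvPolynomial in
lemma aeval_mul_of_isHomogeneous {K σ E : Type*} [Field K] [CommRing E] [Algebra K E]
    {f : MvPolynomial σ K} {d : ℕ} (hf : f.IsHomogeneous d) (r : E) (x : σ → E) :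
    aeval (fun i => r * x i) f = r ^ d * aeval x f := by
  rw [aeval_def, aeval_def, eval₂_eq, eval₂_eq, Finset.mul_sum]
  refine Finset.sum_congr rfl fun s hs => ?_
  have hd : ∑ i ∈ s.support, s i = d := by
    have := hf (mem_support_iff.1 hs)
    simpa [Finsupp.weight_apply, Finsupp.sum] using this
  simp only [mul_pow, Finset.prod_mul_distrib, Finset.prod_pow_eq_pow_sum, hd]
  ring

section Family

variable {K F : Type} [Field K] [Field F] {N m : ℕ} [Algebra (MvPolynomial (Fin N) K) F]
  [IsFractionRing (MvPolynomial (Fin N) K) F] [Algebra K F]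
  [IsScalarTower K (MvPolynomial (Fin N) K) F]


open Polynomial in
/-- The images in `F[τ][s]` of the parameters: `s ↦ s` (`none`), `U_i ↦ s b_i + τ_i x_{i+1}`
(`some (inl i)`) and `T_i ↦ τ_i x_0` (`some (inr i)`). The variable `s` of `F[τ][s]` is
`Polynomial.X`. -/
noncomputable def paramImage (h : m + 1 ≤ N)
    (b : Fin m → F) :
    Option (Fin m ⊕ Fin m) → (MvPolynomial (Fin m) F)[X]
  | none => X
  | some (Sum.inl i) => X * C (MvPolynomial.C (b i)) +
      C (MvPolynomial.X i * MvPolynomial.C (algebraMap (MvPolynomial (Fin N) K) _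
        (MvPolynomial.X ⟨i + 1, by omega⟩)))
  | some (Sum.inr i) => C (MvPolynomial.X i * MvPolynomial.C (algebraMap (MvPolynomial (Fin N) K) _
        (MvPolynomial.X ⟨0, by omega⟩)))

/-- The images of the parameters are algebraically independent: modulo `s` they become
`τ_i x_{i+1}` and `τ_i x_0`. -/
lemma paramImage_injective (h : m + 1 ≤ N)
    (b : Fin m → F) :
    Function.Injective (MvPolynomial.aeval (R := K) (paramImage (K := K) h b)) := by
  apply injective_of_X_adic
  · simp [paramImage]
  let κ : MvPolynomial (Fin m ⊕ Fin m) K →ₐ[K] MvPolynomial (Fin m ⊕ Fin N) K :=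
    MvPolynomial.aeval (Sum.elim
      (fun i => MvPolynomial.X (Sum.inl i) *
        MvPolynomial.X (Sum.inr (⟨i + 1, by omega⟩ : Fin N)))
      (fun i => MvPolynomial.X (Sum.inl i) * MvPolynomial.X (Sum.inr (⟨0, by omega⟩ : Fin N))))
  -- substituting `x_0 = 1` and `x_{i+1} = U_i` turns `κ` into a map covered by `injective_mul_var`
  let ε : MvPolynomial (Fin m ⊕ Fin N) K →ₐ[K] MvPolynomial (Fin m ⊕ Fin m) K :=
    MvPolynomial.aeval (Sum.elim (fun i => MvPolynomial.X (Sum.inr i))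
      (fun k => if k.1 = 0 then 1 else
        if hk : k.1 - 1 < m then MvPolynomial.X (Sum.inl ⟨k.1 - 1, hk⟩) else 0))
  have hκ : Function.Injective κ := by
    apply Function.Injective.of_comp (f := ε)
    rw [← AlgHom.coe_comp]
    convert injective_mul_var (K := K) (id : Fin m → Fin m) using 2
    apply MvPolynomial.algHom_ext
    rintro (i | i) <;> simp [ε, κ]
  have hcomp := (injective_sum_fraction (K := K) (F := F) (α := Fin m) (β := Fin N)).comp hκ
  convert hcomp using 1
  funext f
  rw [← AlgHom.coe_comp, MvPolynomial.aeval_rename, ← Polynomial.coe_evalRingHom,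
    ← AlgHom.coe_toRingHom, ← AlgHom.coe_toRingHom, ← RingHom.comp_apply]
  congr 1
  apply MvPolynomial.ringHom_ext
  · intro r
    simp
  · rintro (i | i) <;> simp [κ, paramImage]

/-- The parametrization `K[x, s, U, T] → F[τ][s][λ]`: it sends `x_k` to `λ x_k` and the parameters
to their images under `paramImage`. The variable `λ` is the outer `Polynomial.X`. -/
noncomputable def familyHom (h : m + 1 ≤ N)
    (b : Fin m → F) :
    MvPolynomial (Fin N ⊕ Option (Fin m ⊕ Fin m)) K →ₐ[K]
      Polynomial (Polynomial (MvPolynomial (Fin m) F)) :=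
  MvPolynomial.aeval (Sum.elim
    (fun k => Polynomial.X * Polynomial.C (Polynomial.C (MvPolynomial.C
      (algebraMap (MvPolynomial (Fin N) K) _ (MvPolynomial.X k)))))
    (fun p => Polynomial.C (paramImage (K := K) h b p)))

/-- The parameter value `s = 1`, `U = T = 0`. -/
def basePoint (K : Type) [Field K] {m : ℕ} : Option (Fin m ⊕ Fin m) → K
  | none => 1
  | some _ => 0

/-- The point `x = 0`, `s = 1`, `U = T = 0` lies in the closure of the image of the
parametrization: an element of the kernel, specialized at `λ = 0`, is an algebraic relation between
the images of the parameters, so it already vanishes at `x = 0`. -/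
lemma familyHom_ker_le (h : m + 1 ≤ N)
    (b : Fin m → F)
    (f : MvPolynomial (Fin N ⊕ Option (Fin m ⊕ Fin m)) K) (hf : familyHom (K := K) h b f = 0) :
    MvPolynomial.aeval (Sum.elim (fun _ => 0) (basePoint K)) f = 0 := by
  let π : MvPolynomial (Fin N ⊕ Option (Fin m ⊕ Fin m)) K →ₐ[K]
      MvPolynomial (Option (Fin m ⊕ Fin m)) K :=
    MvPolynomial.aeval (Sum.elim (fun _ => 0) MvPolynomial.X)
  have h1 : MvPolynomial.aeval (paramImage (K := K) h b) (π f) = (familyHom (K := K) h b f).eval 0 := by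
    rw [← Polynomial.coe_evalRingHom, ← AlgHom.comp_apply, ← AlgHom.coe_toRingHom,
      ← AlgHom.coe_toRingHom, ← RingHom.comp_apply]
    congr 1
    apply MvPolynomial.ringHom_ext
    · intro r
      simp
    · rintro (k | p) <;> simp [familyHom, π]
  rw [hf, Polynomial.eval_zero] at h1
  have h2 : π f = 0 := paramImage_injective h b (by rw [h1, map_zero])
  have h3 : (MvPolynomial.aeval (basePoint K)).comp π =
      MvPolynomial.aeval (Sum.elim (fun _ => 0) (basePoint K)) := by
    apply MvPolynomial.algHom_ext
    rintro (k | p) <;> simp [π]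
  rw [← h3, AlgHom.comp_apply, h2, map_zero]

/-- The images of `s`, of the `T_i` and of the `x_k` are algebraically independent; this is seen at
`λ = 1`. -/
lemma familyHom_injective_aeval (h : m + 1 ≤ N) (b : Fin m → F) :
    Function.Injective (MvPolynomial.aeval (R := K)
      (fun p : Option (Fin m ⊕ Fin N) => familyHom (K := K) h b (MvPolynomial.X
      (p.elim (Sum.inr none) (Sum.elim (fun i => Sum.inr (some (Sum.inr i))) Sum.inl))))) := by
  let θ : MvPolynomial (Option (Fin m ⊕ Fin N)) K →ₐ[K] Polynomial (MvPolynomial (Fin m) F) :=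
    MvPolynomial.aeval (fun p => p.elim Polynomial.X (Sum.elim
      (fun i => Polynomial.C (MvPolynomial.X i * MvPolynomial.C (algebraMap (MvPolynomial (Fin N) K)
        F (MvPolynomial.X ⟨0, by omega⟩))))
      (fun k => Polynomial.C (MvPolynomial.C (algebraMap (MvPolynomial (Fin N) K)
        F (MvPolynomial.X k))))))
  have hθ : Function.Injective θ := by
    apply injective_of_X_adic
    · simp [θ]
    have hcomp := (injective_sum_fraction (K := K) (F := F) (α := Fin m) (β := Fin N)).comp
      (injective_mul_var (K := K) (fun _ : Fin m => (⟨0, by omega⟩ : Fin N)))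
    convert hcomp using 1
    funext f
    rw [← AlgHom.coe_comp, MvPolynomial.aeval_rename, ← Polynomial.coe_evalRingHom,
      ← AlgHom.coe_toRingHom, ← AlgHom.coe_toRingHom, ← RingHom.comp_apply]
    congr 1
    apply MvPolynomial.ringHom_ext
    · intro r
      simp
    · rintro (i | i) <;> simp [mul_comm]
  apply Function.Injective.of_comp (f := Polynomial.evalRingHom 1)
  convert hθ using 1
  funext f
  rw [Function.comp_apply, ← AlgHom.coe_toRingHom, ← AlgHom.coe_toRingHom, ← RingHom.comp_apply]
  congr 1
  apply MvPolynomial.ringHom_ext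
  · intro r
    simp
  · rintro (_ | i | i) <;> simp [θ, familyHom, paramImage]

lemma familyHom_rename (h : m + 1 ≤ N)
    (b : Fin m → F) {f : MvPolynomial (Fin N) K} {d : ℕ}
    (hf : f.IsHomogeneous d) :
    familyHom h b (MvPolynomial.rename Sum.inl f) =
      Polynomial.X ^ d * Polynomial.C (Polynomial.C (MvPolynomial.C (algebraMap _ F f))) := by
  rw [familyHom, MvPolynomial.aeval_rename]
  have := aeval_mul_of_isHomogeneous (K := K) hf
    (Polynomial.X : Polynomial (Polynomial (MvPolynomial (Fin m) F)))
    (fun k => Polynomial.C (Polynomial.C (MvPolynomial.C (algebraMap (MvPolynomial (Fin N) K) F (MvPolynomial.X k)))))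
  refine Eq.trans this (congrArg _ ?_)
  let ρ : MvPolynomial (Fin N) K →+* Polynomial (Polynomial (MvPolynomial (Fin m) F)) :=
    Polynomial.C.comp (Polynomial.C.comp (MvPolynomial.C.comp (algebraMap _ _)))
  change _ = ρ f
  rw [← AlgHom.coe_toRingHom]
  refine RingHom.congr_fun ?_ f
  apply MvPolynomial.ringHom_ext
  · intro r
    simp [ρ, IsScalarTower.algebraMap_apply K (MvPolynomial (Fin N) K) F]
  · simp [ρ]

/-- The deformed equation
`s v - ∑ (U_i x_0^{e_i+1} - T_i x_{i+1} x_0^{e_i}) A_i` in `K[x, s, U, T]`. -/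
noncomputable def familyEq (h : m + 1 ≤ N) (v : MvPolynomial (Fin N) K)
    (A : Fin m → MvPolynomial (Fin N) K) (e : Fin m → ℕ) :
    MvPolynomial (Fin N ⊕ Option (Fin m ⊕ Fin m)) K :=
  MvPolynomial.X (Sum.inr none) * MvPolynomial.rename Sum.inl v -
    ∑ i, (MvPolynomial.X (Sum.inr (some (Sum.inl i))) *
        MvPolynomial.X (Sum.inl ⟨0, by omega⟩) ^ (e i + 1) -
      MvPolynomial.X (Sum.inr (some (Sum.inr i))) * MvPolynomial.X (Sum.inl ⟨i + 1, by omega⟩) *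
        MvPolynomial.X (Sum.inl ⟨0, by omega⟩) ^ (e i)) * MvPolynomial.rename Sum.inl (A i)

lemma familyHom_familyEq (h : m + 1 ≤ N) (b : Fin m → F) {v : MvPolynomial (Fin N) K}
    {A : Fin m → MvPolynomial (Fin N) K} {d : ℕ} {dA e : Fin m → ℕ} (hv : v.IsHomogeneous d)
    (hA : ∀ i, (A i).IsHomogeneous (dA i)) (hd : ∀ i, d = dA i + e i + 1)
    (hrel : algebraMap _ F v = ∑ i, b i *
      algebraMap (MvPolynomial (Fin N) K) F (MvPolynomial.X ⟨0, by omega⟩) ^ (e i + 1) *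
      algebraMap _ F (A i)) :
    familyHom h b (familyEq h v A e) = 0 := by
  rw [familyEq, map_sub, map_mul, map_sum, familyHom_rename h b hv, hrel, sub_eq_zero]
  simp only [map_sum, Finset.mul_sum]
  refine Finset.sum_congr rfl fun i _ => ?_
  rw [map_mul (familyHom h b), familyHom_rename h b (hA i), hd i]
  simp only [map_sub, map_mul, map_pow, familyHom, MvPolynomial.aeval_X, Sum.elim_inl,
    Sum.elim_inr, paramImage, map_add]
  ring

/-- Specialization of the parameters at `basePoint`, as a map `K[x, s, U, T] → K[x]`. -/
noncomputable def specializeParams (K : Type) [Field K] (N m : ℕ) :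
    MvPolynomial (Fin N ⊕ Option (Fin m ⊕ Fin m)) K →ₐ[K] MvPolynomial (Fin N) K :=
  MvPolynomial.aeval (Sum.elim MvPolynomial.X (fun p => MvPolynomial.C (basePoint K p)))

lemma specializeParams_familyEq (h : m + 1 ≤ N) (v : MvPolynomial (Fin N) K)
    (A : Fin m → MvPolynomial (Fin N) K) (e : Fin m → ℕ) :
    specializeParams K N m (familyEq h v A e) = v := by
  have hr : ∀ f, specializeParams K N m (MvPolynomial.rename Sum.inl f) = f := by
    intro f
    rw [specializeParams, MvPolynomial.aeval_rename]
    exact MvPolynomial.aeval_X_left_apply f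
  simp only [familyEq, map_sub, map_sum, map_mul, hr]
  simp [specializeParams, basePoint]

/-! ### The dimension count -/

/-- If the last row `v` is an `F`-combination of rows of smaller degree, the ideal of its entries
has height at most `m`. -/
lemma relation_contradiction (h : m + 1 ≤ N) {n : ℕ} (v : Fin n → MvPolynomial (Fin N) K)
    (A : Fin m → Fin n → MvPolynomial (Fin N) K) (d : ℕ) (dA : Fin m → ℕ)
    (hv : ∀ j, (v j).IsHomogeneous d) (hA : ∀ i j, (A i j).IsHomogeneous (dA i))
    (hlt : ∀ i, dA i < d) (c : Fin m → F)
    (hrel : ∀ j, algebraMap (MvPolynomial (Fin N) K) F (v j) =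
      ∑ i, c i * algebraMap (MvPolynomial (Fin N) K) F (A i j))
    (hht : ((m + 1 : ℕ) : ℕ∞) ≤ idealHeight (Ideal.span (Set.range v))) : False := by
  set x0 : F := algebraMap (MvPolynomial (Fin N) K) F (MvPolynomial.X ⟨0, by omega⟩) with hx0
  have hx0ne : x0 ≠ 0 := by
    rw [hx0, Ne, map_eq_zero_iff _ (IsFractionRing.injective (MvPolynomial (Fin N) K) F)]
    exact MvPolynomial.X_ne_zero _
  let e : Fin m → ℕ := fun i => d - dA i - 1
  let b : Fin m → F := fun i => c i / x0 ^ (e i + 1)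
  let ψ := familyHom (K := K) h b
  have hkill : ∀ j, ψ (familyEq h (v j) (fun i => A i j) e) = 0 := by
    intro j
    refine familyHom_familyEq h b (hv j) (fun i => hA i j)
      (fun i => by have := hlt i; simp only [e]; omega) ?_
    rw [hrel j]
    refine Finset.sum_congr rfl fun i _ => ?_
    simp only [b, ← hx0]
    rw [div_mul_cancel₀ _ (pow_ne_zero _ hx0ne)]
  -- `D = S / P` is the coordinate ring of the closure of the family, and `n` is the maximal ideal
  -- of the point `x = 0`, `s = 1`, `U = T = 0`
  let P : Ideal (MvPolynomial (Fin N ⊕ Option (Fin m ⊕ Fin m)) K) := RingHom.ker ψ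
  have hP : P.IsPrime := RingHom.ker_isPrime ψ
  let D := MvPolynomial (Fin N ⊕ Option (Fin m ⊕ Fin m)) K ⧸ P
  let ε : D →ₐ[K] K := Ideal.Quotient.liftₐ P
    (MvPolynomial.aeval (Sum.elim (fun _ => 0) (basePoint K)))
    (fun f hf => familyHom_ker_le h b f hf)
  have hε : Function.Surjective ε := fun r => ⟨algebraMap K D r, by simp⟩
  let n : Ideal D := RingHom.ker ε
  have hn : n.IsMaximal := RingHom.ker_isMaximal_of_surjective ε hε
  let q : Option (Fin m ⊕ Fin N) → Fin N ⊕ Option (Fin m ⊕ Fin m) := fun p =>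
    p.elim (Sum.inr none) (Sum.elim (fun i => Sum.inr (some (Sum.inr i))) Sum.inl)
  let z : Option (Fin m ⊕ Fin N) → D := fun p => Ideal.Quotient.mkₐ K P (MvPolynomial.X (q p))
  have hz : AlgebraicIndependent K z := by
    have hinj := familyHom_injective_aeval (K := K) h b
    have hcomp : (Ideal.Quotient.liftₐ P ψ (fun f hf => hf)).comp (MvPolynomial.aeval z) =
        MvPolynomial.aeval (fun p => ψ (MvPolynomial.X (q p))) := by
      apply MvPolynomial.algHom_ext
      intro p
      rw [AlgHom.comp_apply, MvPolynomial.aeval_X, MvPolynomial.aeval_X]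
      rfl
    refine Function.Injective.of_comp (f := Ideal.Quotient.liftₐ P ψ (fun f hf => hf)) ?_
    rw [← AlgHom.coe_comp, hcomp]
    exact hinj
  have h1 := card_le_height_of_algebraicIndependent hz n
  let w : Option (Fin m ⊕ Fin m) → D := fun p =>
    Ideal.Quotient.mkₐ K P (MvPolynomial.X (Sum.inr p)) - algebraMap K D (basePoint K p)
  have hw : Set.range w ⊆ n := by
    rintro _ ⟨p, rfl⟩
    have hp : ε (Ideal.Quotient.mkₐ K P (MvPolynomial.X (Sum.inr p))) = basePoint K p :=
      MvPolynomial.aeval_X _ _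
    rw [SetLike.mem_coe, RingHom.mem_ker, map_sub, hp, AlgHom.commutes, Algebra.algebraMap_self,
      RingHom.id_apply, sub_self]
  have h2 := Ideal.height_le_ringKrullDim_quotient_add_encard (p := n) (Set.range w) hw
  have hcard : (Set.range w).encard ≤ (2 * m + 1 : ℕ) := by
    rw [← Set.image_univ]
    refine (Set.encard_image_le _ _).trans ?_
    simp [Set.encard_univ, two_mul]
  -- `Q` is the fibre of the family over the base point
  let Q := D ⧸ Ideal.span (Set.range w)
  let μ : MvPolynomial (Fin N ⊕ Option (Fin m ⊕ Fin m)) K →ₐ[K] Q :=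
    (Ideal.Quotient.mkₐ K (Ideal.span (Set.range w))).comp (Ideal.Quotient.mkₐ K P)
  have hμ : Function.Surjective μ :=
    (Ideal.Quotient.mkₐ_surjective K _).comp (Ideal.Quotient.mkₐ_surjective K _)
  let φ : MvPolynomial (Fin N) K →ₐ[K] Q := μ.comp (MvPolynomial.rename Sum.inl)
  have hφ : φ.comp (specializeParams K N m) = μ := by
    apply MvPolynomial.algHom_ext
    rintro (k | p)
    · simp [φ, specializeParams]
    · have : Ideal.Quotient.mkₐ K (Ideal.span (Set.range w)) (w p) = 0 :=
        Ideal.Quotient.eq_zero_iff_mem.2 (Ideal.subset_span ⟨p, rfl⟩)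
      rw [map_sub, sub_eq_zero] at this
      simp only [AlgHom.comp_apply, specializeParams, MvPolynomial.aeval_X, Sum.elim_inr, μ]
      rw [← MvPolynomial.algebraMap_eq, AlgHom.commutes, this, AlgHom.commutes]
  have hφs : Function.Surjective φ := by
    refine Function.Surjective.of_comp (g := specializeParams K N m) ?_
    rw [← AlgHom.coe_comp, hφ]
    exact hμ
  have hφv : ∀ a ∈ Ideal.span (Set.range v), φ a = 0 := by
    intro a ha
    have : Ideal.span (Set.range v) ≤ RingHom.ker φ := by
      rw [Ideal.span_le]
      rintro _ ⟨j, rfl⟩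
      have h3 : μ (familyEq h (v j) (fun i => A i j) e) = 0 := by
        have : Ideal.Quotient.mkₐ K P (familyEq h (v j) (fun i => A i j) e) = 0 :=
          Ideal.Quotient.eq_zero_iff_mem.2 (hkill j)
        simp only [μ, AlgHom.comp_apply, this, map_zero]
      rw [← hφ, AlgHom.comp_apply, specializeParams_familyEq] at h3
      exact h3
    exact this ha
  have h4 : ringKrullDim Q ≤ ringKrullDim (MvPolynomial (Fin N) K ⧸ Ideal.span (Set.range v)) :=
    ringKrullDim_le_of_surjective (Ideal.Quotient.lift _ φ.toRingHom hφv)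
      (Ideal.Quotient.lift_surjective_of_surjective _ _ hφs)
  obtain ⟨r, rfl⟩ := Nat.exists_eq_add_of_le h
  have h5 := h4.trans (ringKrullDim_quotient_le_of_le_idealHeight _ (m + 1) r hht (by
    rw [MvPolynomial.ringKrullDim_of_isNoetherianRing]
    simp))
  have h6 : ((Fintype.card (Option (Fin m ⊕ Fin (m + 1 + r))) : ℕ) : WithBot ℕ∞) ≤
      (r + (2 * m + 1) : ℕ) := by
    calc _ ≤ ((n.height : ℕ∞) : WithBot ℕ∞) := by exact_mod_cast h1
      _ ≤ _ := h2
      _ ≤ (r : WithBot ℕ∞) + (((2 * m + 1 : ℕ) : ℕ∞) : WithBot ℕ∞) :=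
        add_le_add h5 (by exact_mod_cast hcard)
      _ = _ := by push_cast; rfl
  have h7 : Fintype.card (Option (Fin m ⊕ Fin (m + 1 + r))) ≤ r + (2 * m + 1) := by
    exact_mod_cast h6
  simp at h7
  omega

end Family

/-- **Nonzero maximal minor.**  Let `R = K[x_1, …, x_N]` be a polynomial ring over a field and
let `M ∈ R^{(m+1)×n}` be a matrix such that: (a) the entries of the `k`-th row are homogeneous
of a common degree `d_k`, with `d_i < d_{m+1}` for `i ≤ m`; (b) the first `m` rows are linearly
independent over the fraction field of `R`; (c) the ideal generated by the last row has height
at least `m+1`.  Then some `(m+1) × (m+1)` minor of `M` is nonzero. -/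
theorem exists_nonzero_maximal_minor {K : Type} [Field K] {N m n : ℕ}
    (M : Matrix (Fin (m + 1)) (Fin n) (MvPolynomial (Fin N) K))
    (dk : Fin (m + 1) → ℕ)
    (hhom : ∀ k j, (M k j).IsHomogeneous (dk k))
    (hdeg : ∀ i : Fin m, dk i.castSucc < dk (Fin.last m))
    (hindep : LinearIndependent (FractionRing (MvPolynomial (Fin N) K))
      (fun (i : Fin m) (j : Fin n) =>
        algebraMap (MvPolynomial (Fin N) K) (FractionRing (MvPolynomial (Fin N) K))
          (M i.castSucc j)))
    (hht : (m + 1 : ℕ∞) ≤ idealHeight (Ideal.span (Set.range (M (Fin.last m))))) :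
    ∃ cols : Fin (m + 1) → Fin n,
      Function.Injective cols ∧ (M.submatrix id cols).det ≠ 0 := by
  set F := FractionRing (MvPolynomial (Fin N) K)
  set ι := algebraMap (MvPolynomial (Fin N) K) F with hι
  have hιinj : Function.Injective ι := IsFractionRing.injective (MvPolynomial (Fin N) K) F
  by_cases hli : LinearIndependent F (M.map ι)
  · obtain ⟨cols, hinj, hdet⟩ := exists_minor_of_linearIndependent _ hli
    refine ⟨cols, hinj, fun h0 => hdet ?_⟩
    rw [Matrix.submatrix_map, ← RingHom.mapMatrix_apply, ← RingHom.map_det, h0, map_zero]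
  exfalso
  have hmem : (fun j => ι (M (Fin.last m) j)) ∈
      Submodule.span F (Set.range fun (i : Fin m) (j : Fin n) => ι (M i.castSucc j)) := by
    by_contra hnot
    refine hli ?_
    have := linearIndependent_finSnoc.2 ⟨hindep, hnot⟩
    have hrows : (Fin.snoc (fun (i : Fin m) (j : Fin n) => ι (M i.castSucc j))
        (fun j => ι (M (Fin.last m) j)) : Fin (m + 1) → Fin n → F) = M.map ι := by
      funext k
      refine Fin.lastCases ?_ (fun i => ?_) k
      · rw [Fin.snoc_last]; rfl
      · rw [Fin.snoc_castSucc]; rfl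
    exact hrows ▸ this
  obtain ⟨c, hc⟩ := (Submodule.mem_span_range_iff_exists_fun F).1 hmem
  have hrel : ∀ j, ι (M (Fin.last m) j) = ∑ i : Fin m, c i * ι (M i.castSucc j) := by
    intro j
    have := congrFun hc j
    simpa using this.symm
  have hht' : ((m + 1 : ℕ) : ℕ∞) ≤ idealHeight (Ideal.span (Set.range (M (Fin.last m)))) := by
    exact_mod_cast hht
  -- for `m = 0` the last row is zero; for `m > 0` its degree is positive
  have hI : Ideal.span (Set.range (M (Fin.last m))) ≤
      RingHom.ker (MvPolynomial.constantCoeff (σ := Fin N) (R := K)) := by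
    rw [Ideal.span_le]
    rintro _ ⟨j, rfl⟩
    rw [SetLike.mem_coe, RingHom.mem_ker]
    rcases Nat.eq_zero_or_pos m with rfl | hm
    · have : M (Fin.last 0) j = 0 := hιinj (by simpa using hrel j)
      rw [this, map_zero]
    · have := hdeg ⟨0, hm⟩
      exact (hhom (Fin.last m) j).coeff_eq_zero (by simp; omega)
  have hprime : (RingHom.ker (MvPolynomial.constantCoeff (σ := Fin N) (R := K))).IsPrime :=
    RingHom.ker_isPrime _
  have hN : m + 1 ≤ N := by
    have h1 : ((m + 1 : ℕ) : ℕ∞) ≤ Order.height (⟨_, hprime⟩ :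
        PrimeSpectrum (MvPolynomial (Fin N) K)) := hht'.trans
          (iInf₂_le (⟨_, hprime⟩ : PrimeSpectrum (MvPolynomial (Fin N) K)) hI)
    have h2 : ringKrullDim (MvPolynomial (Fin N) K) = N := by
      rw [MvPolynomial.ringKrullDim_of_isNoetherianRing]
      simp
    have h3 := Order.height_le_krullDim (⟨_, hprime⟩ : PrimeSpectrum (MvPolynomial (Fin N) K))
    change _ ≤ ringKrullDim _ at h3
    rw [h2] at h3
    have h4 : (((m + 1 : ℕ) : ℕ∞) : WithBot ℕ∞) ≤ N := le_trans (by exact_mod_cast h1) h3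
    exact_mod_cast h4
  exact relation_contradiction hN (M (Fin.last m)) (fun i => M i.castSucc) (dk (Fin.last m))
    (fun i => dk i.castSucc) (hhom _) (fun i => hhom _) hdeg c hrel hht'
end

section
/- Let K be a field, let V_1, ..., V_d, W be finite-dimensional vector spaces over K, and let F : V_1 × ... × V_d → W be a multilinear map. Then β(F) ≤ Q(T_F). -/
/-!
If `F` is injective on `U₁ ⊗ ⋯ ⊗ U_d` with all `dim Uᵢ = s`, identify each `Uᵢ` with `K^s`. A left
inverse `W → U₁ ⊗ ⋯ ⊗ U_d` of the linearised restriction, followed by the linearisation of the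
coordinatewise product `K^s × ⋯ × K^s → K^s`, is a map `h` exhibiting the identity tensor `I_s` as
a restriction of `T_F` (`exists_restriction_of_injective`). So every `s` admissible for `β(F)` is
admissible for `Q(T_F)`.

Since both quantities are suprema in `ℕ`, where an unbounded set has supremum `0`, one also needs
the values admissible for `Q(T_F)` to be bounded. For `d ≥ 1` they are at most `dim V₁`, because
`u₁` must be injective (`le_finrank_of_restriction`). For `d = 0` the set defining `β(F)` is `∅` or
all of `ℕ`, so `compIndex F = 0` by convention.
-/

open Module
open scoped TensorProduct

section Defs

variable {K : Type} [Field K] {d : ℕ} {V : Fin d → Type} {W : Type}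
  [∀ i, AddCommGroup (V i)] [∀ i, Module K (V i)]
  [AddCommGroup W] [Module K W]

/-- The subrank `Q(T_F)` of the order-`(d+1)` tensor `T_F ∈ V₁* ⊗ ⋯ ⊗ V_d* ⊗ W` corresponding
to a multilinear map `F`: the largest `r` such that the identity tensor `I_r ∈ (K^r)^{⊗(d+1)}`
equals `(g₁, …, g_d, h)·T_F` for suitable linear maps `gᵢ : Vᵢ* → K^r` and `h : W → K^r`.
For finite-dimensional spaces this is equivalent (replacing each `gᵢ` by its transpose
`uᵢ : K^r → Vᵢ`) to: `h (F (u₁ x₁, …, u_d x_d))` is the coordinatewise product of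
`x₁, …, x_d ∈ K^r` for all `x`. -/
noncomputable def mapSubrank (F : MultilinearMap K V W) : ℕ :=
  sSup {r : ℕ | ∃ (u : ∀ i, (Fin r → K) →ₗ[K] V i) (h : W →ₗ[K] (Fin r → K)),
    ∀ x : Fin d → (Fin r → K),
      h (F fun i => u i (x i)) = fun j => ∏ i, x i j}

end Defs

/-- Injectivity of `F` on a tensor product of `s`-dimensional subspaces yields linear maps carrying
`F` to the coordinatewise product on `K^s`. -/
lemma exists_restriction_of_injective {K : Type} [Field K] {d : ℕ}
    {V : Fin d → Type} {W : Type}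
    [∀ i, AddCommGroup (V i)] [∀ i, Module K (V i)] [∀ i, FiniteDimensional K (V i)]
    [AddCommGroup W] [Module K W] (F : MultilinearMap K V W) {s : ℕ}
    (U : ∀ i, Submodule K (V i)) (hU : ∀ i, Module.finrank K (U i) = s)
    (hinj : Function.Injective
      (PiTensorProduct.lift (F.compLinearMap fun i => (U i).subtype))) :
    ∃ (u : ∀ i, (Fin s → K) →ₗ[K] V i) (h : W →ₗ[K] (Fin s → K)),
      ∀ x : Fin d → (Fin s → K), h (F fun i => u i (x i)) = fun j => ∏ i, x i j := by
  have e : ∀ i, (Fin s → K) ≃ₗ[K] U i := fun i =>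
    LinearEquiv.ofFinrankEq _ _ (by simp [hU i])
  obtain ⟨L, hL⟩ := LinearMap.exists_leftInverse_of_injective _ (LinearMap.ker_eq_bot.mpr hinj)
  let m : MultilinearMap K (fun i => U i) (Fin s → K) :=
    MultilinearMap.pi fun j => (MultilinearMap.mkPiAlgebra K (Fin d) K).compLinearMap
      fun i => LinearMap.proj j ∘ₗ (e i).symm.toLinearMap
  refine ⟨fun i => (U i).subtype ∘ₗ (e i).toLinearMap, PiTensorProduct.lift m ∘ₗ L, fun x => ?_⟩
  have hx := LinearMap.congr_fun hL (PiTensorProduct.tprod K fun i => e i (x i))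
  simp only [LinearMap.comp_apply, PiTensorProduct.lift.tprod, LinearMap.id_apply,
    MultilinearMap.compLinearMap_apply] at hx
  simp only [LinearMap.comp_apply, LinearEquiv.coe_coe]
  rw [hx, PiTensorProduct.lift.tprod]
  funext j
  simp [m]

/-- Any map `u i` in a restriction of `F` to the coordinatewise product on `K^r` is injective:
evaluating the product at `1` in all other arguments recovers the `i`-th one. -/
lemma le_finrank_of_restriction {K : Type} [Field K] {d : ℕ}
    {V : Fin d → Type} {W : Type}
    [∀ i, AddCommGroup (V i)] [∀ i, Module K (V i)] [∀ i, FiniteDimensional K (V i)]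
    [AddCommGroup W] [Module K W] (F : MultilinearMap K V W) {r : ℕ}
    (u : ∀ i, (Fin r → K) →ₗ[K] V i) (h : W →ₗ[K] (Fin r → K))
    (huh : ∀ x : Fin d → (Fin r → K), h (F fun i => u i (x i)) = fun j => ∏ i, x i j)
    (i : Fin d) : r ≤ Module.finrank K (V i) := by
  have hinj : Function.Injective (u i) := by
    refine (injective_iff_map_eq_zero _).mpr fun y hy => ?_
    have h1 := huh (Function.update (fun _ => 1) i y)
    rw [F.map_coord_zero i (by simpa using hy), map_zero] at h1
    funext j
    have h2 := congrFun h1 j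
    rw [Finset.prod_eq_single i (fun k _ hk => by simp [hk]) (by simp)] at h2
    simpa using h2.symm
  simpa using LinearMap.finrank_le_finrank_of_injective hinj

/-- **Completeness index bounds the subrank from below.**  For any multilinear map
`F : V₁ × ⋯ × V_d → W` of finite-dimensional vector spaces over a field `K`,
`β(F) ≤ Q(T_F)`. -/
theorem compIndex_le_subrank {K : Type} [Field K] {d : ℕ}
    (V : Fin d → Type) (W : Type)
    [∀ i, AddCommGroup (V i)] [∀ i, Module K (V i)] [∀ i, FiniteDimensional K (V i)]
    [AddCommGroup W] [Module K W] [FiniteDimensional K W]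
    (F : MultilinearMap K V W) :
    compIndex F ≤ mapSubrank F := by
  rcases d with _ | d
  · have h0 : compIndex F = 0 := by
      unfold compIndex
      -- With no factors, the dimension condition is vacuous, so admissibility is independent of `s`.
      by_cases hF : ∃ U : ∀ i, Submodule K (V i), Function.Injective
          (PiTensorProduct.lift (F.compLinearMap fun i => (U i).subtype))
      · obtain ⟨U, hU⟩ := hF
        refine Nat.sSup_of_not_bddAbove fun ⟨b, hb⟩ => ?_
        have := hb (show b + 1 ∈ _ from ⟨U, fun i => i.elim0, hU⟩)
        omega
      · refine (congrArg sSup (Set.eq_empty_of_forall_notMem ?_)).trans csSup_empty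
        rintro s ⟨U, _, hU⟩
        exact hF ⟨U, hU⟩
    rw [h0]
    exact Nat.zero_le _
  · refine csSup_le' fun s ⟨U, hU, hinj⟩ => le_csSup ?_ ?_
    · exact ⟨Module.finrank K (V 0), fun r ⟨u, h, huh⟩ => le_finrank_of_restriction F u h huh 0⟩
    · exact exists_restriction_of_injective F U hU hinj
end

section
/- For every integer k ≥ 2 there is a constant C(k) > 0 such that for any field K, any finite-dimensional vector spaces V_1, ..., V_k over K, and any tensor T ∈ V_1 ⊗ ... ⊗ V_k, one has Q(T) ≤ PR(T) ≤ C(k) · Q(T)^{(k-1)^2}. -/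
/-!
Write `k = n + 1` and let `t = tensorForm T` be the multilinear form on `V₀* × ⋯ × V_n*` given
by `T`.

**Lower bound.** Partition rank does not increase under restriction, so it suffices that the
identity tensor of size `r` has partition rank at least `r`. This is Tao's slice rank argument
in the form of Naslund, by induction on the order (`card_support_le_of_diagonal`): given a
diagonal tensor as a sum of terms of partition rank one, choose a vector `w` orthogonal to the
first factors of the terms splitting off coordinate `0`, with support as large as possible;
contracting coordinate `0` with `w` kills these terms, keeps the tensor diagonal, and loses at
most one diagonal entry per killed term.

**Upper bound.** Suppose that the identity tensor of size `r` is not a restriction of `T`. Index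
rows and columns by `J = Fin n → Fin r`. For `y_l ∈ V₀*` (`l ∈ J`) and `z_i(a) ∈ V_{i+1}*`
(`a < r`), consider the `J × J` matrix with entries `t(y_l, z_0(j_0), …, z_{n-1}(j_{n-1}))`. If
it were invertible, suitable combinations of the `y_l` together with the `z_i` would restrict
`T` to the identity tensor (`exists_restriction_of_det_ne_zero`); so its determinant vanishes
identically.

Substituting `z_i(a) = ∑ x_i(l)` over `l ∈ E_i` with `l_i = a` and applying inclusion-exclusion
over the sets `E_i ⊆ J` polarizes the determinant over any field, however small. The result
(`polarized_det_eq_zero`) is a vanishing signed sum of products `∏_j t(x(position of j))`, in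
which every vector `x_i(l)` occurs exactly once in every monomial, and in which the fully
diagonal monomial has coefficient `1`.

For `S ⊆ J` let `F_S` be the sum over the monomials whose factors with index in `S` are diagonal,
with those factors removed. Since `F_∅ = 0` and `F_J = 1`, some step from `S` to `S ∪ {j₀}` leads
from an identically vanishing form to one that does not vanish at some point `x`. Replacing the
vectors of index `j₀` in `x` by an arbitrary `v` in `F_S = 0` expresses `t(v)` as a sum of terms
`A_p(v) * B_p(v)` in complementary groups of variables, where `p` runs over the nondiagonal
positions with `p 0 = j₀` (`exists_split_of_vanishing`). There are `r ^ n ^ 2 - 1` of these.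
Taking `r = Q(T) + 1` gives `PR(T) < (Q(T) + 1) ^ n ^ 2`, hence the theorem with
`C = 2 ^ (k - 1) ^ 2`.
-/

open Module
open scoped TensorProduct

section Defs

variable {K : Type} [Field K] {k : ℕ} {V : Fin k → Type}
  [∀ i, AddCommGroup (V i)] [∀ i, Module K (V i)]

/-- A tensor `T ∈ V₁ ⊗ ⋯ ⊗ V_k` has partition rank one if, for some proper nonempty subset
`P ⊆ {1, …, k}`, it is of the form `S₁ ⊗ S₂` with `S₁ ∈ ⊗_{i ∈ P} Vᵢ` and
`S₂ ∈ ⊗_{i ∉ P} Vᵢ` (writing `S₁` and `S₂` as finite sums of pure tensors). -/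
def IsPartitionRankOne (T : ⨂[K] i, V i) : Prop :=
  ∃ P : Finset (Fin k), P.Nonempty ∧ P ≠ Finset.univ ∧
    ∃ (a b : ℕ) (x : Fin a → ∀ i, V i) (y : Fin b → ∀ i, V i),
      T = ∑ s : Fin a, ∑ t : Fin b,
        PiTensorProduct.tprod K fun i => if i ∈ P then x s i else y t i

/-- The partition rank `PR(T)` of a tensor `T ∈ V₁ ⊗ ⋯ ⊗ V_k`: the least `r` such that `T` is
a sum of `r` tensors of partition rank one. -/
noncomputable def tensorPartitionRank (T : ⨂[K] i, V i) : ℕ :=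
  sInf {r : ℕ | ∃ c : Fin r → ⨂[K] i, V i,
    (∀ j, IsPartitionRankOne (c j)) ∧ T = ∑ j, c j}

/-- The subrank `Q(T)` of a tensor `T ∈ V₁ ⊗ ⋯ ⊗ V_k`: the largest `r` such that the identity
tensor `I_r = ∑ⱼ eⱼ ⊗ ⋯ ⊗ eⱼ ∈ (K^r)^{⊗k}` equals `(g₁, …, g_k)·T` for suitable linear maps
`gᵢ : Vᵢ → K^r`. -/
noncomputable def subrank (T : ⨂[K] i, V i) : ℕ :=
  sSup {r : ℕ | ∃ g : ∀ i, V i →ₗ[K] (Fin r → K),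
    PiTensorProduct.map g T =
      ∑ j : Fin r, PiTensorProduct.tprod K fun _ => Pi.single j (1 : K)}

end Defs

/-! ### Tensors as multilinear forms on the dual spaces -/

section Evaluation

variable {K : Type} [Field K] {k : ℕ} {V : Fin k → Type}
  [∀ i, AddCommGroup (V i)] [∀ i, Module K (V i)]

/-- The form `(φ₁, …, φ_k) ↦ (φ₁ ⊗ ⋯ ⊗ φ_k)(T)` on `V₁* × ⋯ × V_k*` attached to a tensor `T`. -/
noncomputable def tensorForm (T : ⨂[K] i, V i) :
    MultilinearMap K (fun i => V i →ₗ[K] K) K :=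
  ((PiTensorProduct.constantBaseRingEquiv (Fin k) K).toLinearMap ∘ₗ
    LinearMap.applyₗ T).compMultilinearMap (PiTensorProduct.mapMultilinear K V fun _ => K)

theorem tensorForm_apply (T : ⨂[K] i, V i) (φ : ∀ i, V i →ₗ[K] K) :
    tensorForm T φ =
      PiTensorProduct.constantBaseRingEquiv (Fin k) K (PiTensorProduct.map φ T) := rfl

@[simp]
theorem tensorForm_tprod (x : ∀ i, V i) (φ : ∀ i, V i →ₗ[K] K) :
    tensorForm (PiTensorProduct.tprod K x) φ = ∏ i, φ i (x i) := by
  simp [tensorForm_apply]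

theorem tensorForm_sum {ι : Type} (s : Finset ι) (c : ι → ⨂[K] i, V i)
    (φ : ∀ i, V i →ₗ[K] K) :
    tensorForm (∑ j ∈ s, c j) φ = ∑ j ∈ s, tensorForm (c j) φ := by
  simp [tensorForm_apply]

theorem tensorForm_map {W : Fin k → Type} [∀ i, AddCommGroup (W i)] [∀ i, Module K (W i)]
    (g : ∀ i, V i →ₗ[K] W i) (T : ⨂[K] i, V i) (φ : ∀ i, W i →ₗ[K] K) :
    tensorForm (PiTensorProduct.map g T) φ = tensorForm T fun i => φ i ∘ₗ g i := by
  rw [tensorForm_apply, tensorForm_apply, PiTensorProduct.map_comp]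
  rfl

theorem piTensorBasis_repr {κ : Fin k → Type} (b : ∀ i, Basis (κ i) K (V i))
    (T : ⨂[K] i, V i) (α : ∀ i, κ i) :
    (Basis.piTensorProduct b).repr T α = tensorForm T fun i => (b i).coord (α i) := by
  induction T using PiTensorProduct.induction_on with
  | smul_tprod r x => simp [tensorForm_apply]
  | add x y hx hy => simp_all [tensorForm_apply]

theorem eq_sum_tensorForm {κ : Fin k → Type} [∀ i, Fintype (κ i)]
    (b : ∀ i, Basis (κ i) K (V i)) (T : ⨂[K] i, V i) :
    T = ∑ α : ∀ i, κ i, (tensorForm T fun i => (b i).coord (α i)) •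
      PiTensorProduct.tprod K fun i => b i (α i) := by
  conv_lhs => rw [← (Basis.piTensorProduct b).sum_repr T]
  simp [piTensorBasis_repr]

theorem tensorForm_injective {κ : Fin k → Type}
    (b : ∀ i, Basis (κ i) K (V i)) {S T : ⨂[K] i, V i}
    (h : ∀ α : ∀ i, κ i, (tensorForm S fun i => (b i).coord (α i)) =
      tensorForm T fun i => (b i).coord (α i)) : S = T := by
  refine (Basis.piTensorProduct b).ext_elem fun α => ?_
  simp only [piTensorBasis_repr, h]

end Evaluation

/-! ### Tensors of partition rank one -/

section PartitionRank

variable {K : Type} [Field K] {k : ℕ} {V : Fin k → Type}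
  [∀ i, AddCommGroup (V i)] [∀ i, Module K (V i)]

theorem tensorPartitionRank_le_card {ι : Type} [Fintype ι] (c : ι → ⨂[K] i, V i)
    (hc : ∀ j, IsPartitionRankOne (c j)) {T : ⨂[K] i, V i} (hT : T = ∑ j, c j) :
    tensorPartitionRank T ≤ Fintype.card ι := by
  refine Nat.sInf_le ⟨fun j => c ((Fintype.equivFin ι).symm j), fun j => hc _, ?_⟩
  rw [hT]
  exact ((Fintype.equivFin ι).symm.sum_comp c).symm

/-- Some decomposition exists, so the infimum defining `tensorPartitionRank` is not the junk value
of the empty set. -/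
theorem exists_partitionRank_decomposition (hk : 2 ≤ k) (T : ⨂[K] i, V i) :
    ∃ (r : ℕ) (c : Fin r → ⨂[K] i, V i), (∀ j, IsPartitionRankOne (c j)) ∧ T = ∑ j, c j := by
  induction T using PiTensorProduct.induction_on with
  | smul_tprod r x =>
    let i₀ : Fin k := ⟨0, by omega⟩
    refine ⟨1, fun _ => r • PiTensorProduct.tprod K x, fun _ => ?_, by simp⟩
    refine ⟨{i₀}, by simp, ?_, 1, 1, fun _ => Function.update x i₀ (r • x i₀),
      fun _ => Function.update x i₀ (r • x i₀), ?_⟩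
    · intro h
      have := Finset.mem_univ (⟨1, by omega⟩ : Fin k)
      rw [← h] at this
      simp [i₀] at this
    · simp
  | add S T hS hT =>
    obtain ⟨a, c, hc, rfl⟩ := hS
    obtain ⟨b, d, hd, rfl⟩ := hT
    refine ⟨a + b, Fin.append c d, fun j => ?_, by simp [Fin.sum_univ_add]⟩
    induction j using Fin.addCases with
    | left j => simpa using hc j
    | right j => simpa using hd j

/-- A combination of pure tensors whose coefficients split as `A α * B α`, with `A` depending only
on the indices in `P` and `B` only on the other ones, has partition rank one. -/
theorem isPartitionRankOne_of_split {κ : Fin k → Type} [∀ i, Fintype (κ i)]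
    (e : ∀ i, κ i → V i) (P : Finset (Fin k)) (hP : P.Nonempty) (hP' : P ≠ Finset.univ)
    (A B : (∀ i, κ i) → K)
    (hA : ∀ α β : ∀ i, κ i, (∀ i ∈ P, α i = β i) → A α = A β)
    (hB : ∀ α β : ∀ i, κ i, (∀ i ∉ P, α i = β i) → B α = B β) :
    IsPartitionRankOne
      (∑ α : ∀ i, κ i, (A α * B α) • PiTensorProduct.tprod K fun i => e i (α i)) := by
  classical
  refine ⟨P, hP, hP', ?_⟩
  rcases isEmpty_or_nonempty (∀ i, κ i) with hemp | ⟨⟨α₀⟩⟩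
  · exact ⟨0, 0, Fin.elim0, Fin.elim0, by simp⟩
  obtain ⟨i₁, hi₁⟩ := hP
  obtain ⟨i₂, hi₂⟩ : ∃ i, i ∉ P := by
    by_contra! h
    exact hP' (Finset.eq_univ_iff_forall.2 h)
  -- `exL` and `exR` extend partial multi-indices by `α₀`; the scalar `A` is absorbed into the
  -- factor `i₁ ∈ P` and the scalar `B` into the factor `i₂ ∉ P`
  let exL : (∀ i : {i // i ∈ P}, κ i) → ∀ i, κ i := fun s i => if h : i ∈ P then s ⟨i, h⟩ else α₀ i
  let exR : (∀ i : {i // i ∉ P}, κ i) → ∀ i, κ i := fun s i => if h : i ∉ P then s ⟨i, h⟩ else α₀ i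
  let xL : (∀ i : {i // i ∈ P}, κ i) → ∀ i, V i := fun s =>
    Function.update (fun i => e i (exL s i)) i₁ (A (exL s) • e i₁ (exL s i₁))
  let xR : (∀ i : {i // i ∉ P}, κ i) → ∀ i, V i := fun s =>
    Function.update (fun i => e i (exR s i)) i₂ (B (exR s) • e i₂ (exR s i₂))
  refine ⟨_, _, fun j => xL ((Fintype.equivFin _).symm j),
    fun j => xR ((Fintype.equivFin _).symm j), ?_⟩
  rw [(Fintype.equivFin (∀ i : {i // i ∈ P}, κ i)).symm.sum_comp
    (fun s => ∑ t, PiTensorProduct.tprod K fun i => if i ∈ P then xL s i else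
      xR ((Fintype.equivFin _).symm t) i)]
  rw [← (Equiv.piEquivPiSubtypeProd (· ∈ P) κ).symm.sum_comp, Fintype.sum_prod_type]
  refine Finset.sum_congr rfl fun s _ => ?_
  rw [(Fintype.equivFin (∀ i : {i // i ∉ P}, κ i)).symm.sum_comp
    (fun t => PiTensorProduct.tprod K fun i => if i ∈ P then xL s i else xR t i)]
  refine Finset.sum_congr rfl fun t _ => ?_
  set α := (Equiv.piEquivPiSubtypeProd (· ∈ P) κ).symm (s, t) with hα
  have hαL : ∀ i ∈ P, α i = exL s i := fun i hi => by
    simp [hα, exL, hi, Equiv.piEquivPiSubtypeProd]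
  have hαR : ∀ i ∉ P, α i = exR t i := fun i hi => by
    simp [hα, exR, hi, Equiv.piEquivPiSubtypeProd]
  have hne : i₁ ≠ i₂ := fun h => hi₂ (h ▸ hi₁)
  have key : (fun i => if i ∈ P then xL s i else xR t i) =
      Function.update (Function.update (fun i => e i (α i)) i₂ (B α • e i₂ (α i₂))) i₁
        (A α • e i₁ (α i₁)) := by
    funext i
    by_cases h1 : i = i₁
    · subst h1
      simp [hi₁, xL, hαL i hi₁, hA α (exL s) hαL]
    by_cases h2 : i = i₂
    · subst h2
      simp [hi₂, xR, h1, hαR i hi₂, hB α (exR t) hαR]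
    by_cases hi : i ∈ P
    · simp [hi, xL, h1, h2, hαL i hi]
    · simp [hi, xR, h1, h2, hαR i hi]
  rw [key, MultilinearMap.map_update_smul, Function.update_eq_self_iff.2 (by simp [hne]),
    MultilinearMap.map_update_smul, Function.update_eq_self, smul_smul]

end PartitionRank

/-! ### From a vanishing polarized form to a decomposition of `t` -/

section Derivative

/-- Suppose that a combination of monomials `∏ j, t (x (pos m j))` with coefficients `c m` vanishes
for all `x`, where every monomial uses each vector `x i l` exactly once (`hbij`), has no diagonal
factor outside its own index (`hdiag`), and the fully diagonal monomials have nonzero total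
coefficient (`hone`). Then `t` is a sum of products `A p * B p`, where `A p` depends only on the
variables `i` with `p i = j₀`, and `B p` only on the other ones. -/
theorem exists_split_of_vanishing {K : Type} [Field K] {n : ℕ} {W : Fin (n + 1) → Type}
    {J M : Type} [Fintype J] [DecidableEq J] [Fintype M]
    (t : (∀ i, W i) → K) (pos : M → J → Fin (n + 1) → J) (c : M → K)
    (hbij : ∀ m, c m ≠ 0 → ∀ i, Function.Bijective fun j => pos m j i)
    (hdiag : ∀ m, c m ≠ 0 → ∀ j j₀, (pos m j = fun _ => j₀) → j = j₀)
    (hone : ∑ m with ∀ j, pos m j = fun _ => j, c m ≠ 0)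
    (hzero : ∀ x : ∀ i, J → W i, ∑ m, c m * ∏ j, t (fun i => x i (pos m j i)) = 0)
    (hW : Nonempty (∀ i, J → W i)) :
    ∃ (j₀ : J) (A B : (Fin (n + 1) → J) → (∀ i, W i) → K),
      (∀ p v w, (∀ i, p i = j₀ → v i = w i) → A p v = A p w) ∧
      (∀ p v w, (∀ i, p i ≠ j₀ → v i = w i) → B p v = B p w) ∧
      ∀ v, t v = ∑ p : {p : Fin (n + 1) → J // p 0 = j₀ ∧ p ≠ fun _ => j₀}, A p v * B p v := by
  classical
  -- `F S` collects the monomials whose factors with index in `S` are diagonal, and omits these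
  -- factors
  let F : Finset J → (∀ i, J → W i) → K := fun S x =>
    ∑ m with c m ≠ 0 ∧ ∀ j ∈ S, pos m j = fun _ => j,
      c m * ∏ j ∈ Sᶜ, t (fun i => x i (pos m j i))
  have hF0 : ∀ x, F ∅ x = 0 := fun x => by
    rw [← hzero x]
    simp only [F, Finset.notMem_empty, false_imp_iff, implies_true, and_true, Finset.compl_empty]
    refine Finset.sum_filter_of_ne fun m _ h => left_ne_zero_of_mul h
  have hF1 : ∀ x, F Finset.univ x ≠ 0 := fun x => by
    convert hone using 1
    simp only [F, Finset.compl_univ, Finset.prod_empty, mul_one, Finset.mem_univ, true_imp_iff]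
    rw [← Finset.filter_filter, Finset.sum_filter, Finset.sum_filter, Finset.sum_filter]
    refine Finset.sum_congr rfl fun m _ => ?_
    by_cases h : c m = 0 <;> simp [h]
  obtain ⟨S, j₀, hj₀, hS, x, hx⟩ : ∃ S j₀, j₀ ∉ S ∧ (∀ x, F S x = 0) ∧
      ∃ x, F (insert j₀ S) x ≠ 0 := by
    by_contra! h
    obtain ⟨x⟩ := hW
    refine hF1 x ?_
    have : ∀ S : Finset J, ∀ x, F S x = 0 := by
      intro S
      induction S using Finset.induction_on with
      | empty => exact hF0
      | insert a S ha ih => exact h S a ha ih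
    exact this _ x
  -- `y v` is the family `x` with the vectors of index `j₀` replaced by the `v i`
  let y : (∀ i, W i) → ∀ i, J → W i := fun v i => Function.update (x i) j₀ (v i)
  have hy : ∀ v i, y v i j₀ = v i := fun v i => by simp [y]
  have hy' : ∀ v i j, j ≠ j₀ → y v i j = x i j := fun v i j h => by simp [y, h]
  -- the row of the monomial `m` which involves the vector of index `j₀` in the first factor
  have hrow : ∀ m, ∃ j, c m ≠ 0 → pos m j 0 = j₀ := fun m => by
    by_cases h : c m = 0
    · exact ⟨j₀, fun h' => absurd h h'⟩
    · obtain ⟨j, hj⟩ := (hbij m h 0).2 j₀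
      exact ⟨j, fun _ => hj⟩
  choose row hrow using hrow
  -- the monomials of `F S` that do not contribute to `F (insert j₀ S)`
  let bad : Finset M := {m | (c m ≠ 0 ∧ ∀ j ∈ S, pos m j = fun _ => j) ∧ pos m j₀ ≠ fun _ => j₀}
  have hbad : ∀ m ∈ bad, c m ≠ 0 ∧ (∀ j ∈ S, pos m j = fun _ => j) ∧ pos m j₀ ≠ fun _ => j₀ :=
    fun m hm => by simpa [bad, and_assoc] using hm
  have hrowS : ∀ m ∈ bad, row m ∈ Sᶜ := fun m hm => by
    obtain ⟨h1, h2, -⟩ := hbad m hm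
    rw [Finset.mem_compl]
    intro h
    have h3 := hrow m h1
    rw [h2 _ h] at h3
    exact hj₀ (h3 ▸ h)
  -- `A p` is the factor containing the first-mode vector of index `j₀`; `B p` collects the
  -- remaining factors of all bad monomials in which that factor has position `p`
  let A : (Fin (n + 1) → J) → (∀ i, W i) → K := fun p v => t fun i => y v i (p i)
  let B : (Fin (n + 1) → J) → (∀ i, W i) → K := fun p v =>
    -(F (insert j₀ S) x)⁻¹ * ∑ m ∈ bad with pos m (row m) = p,
      c m * ∏ j ∈ Sᶜ.erase (row m), t (fun i => y v i (pos m j i))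
  refine ⟨j₀, A, B, fun p v w h => ?_, fun p v w h => ?_, fun v => ?_⟩
  · simp only [A]
    congr 1
    funext i
    by_cases hi : p i = j₀
    · rw [hi, hy, hy, h i hi]
    · rw [hy' v i _ hi, hy' w i _ hi]
  · simp only [B]
    congr 1
    refine Finset.sum_congr rfl fun m hm => ?_
    obtain ⟨hmb, rfl⟩ := Finset.mem_filter.1 hm
    congr 1
    refine Finset.prod_congr rfl fun j hj => ?_
    congr 1
    funext i
    by_cases hi : pos m j i = j₀
    · rw [hi, hy, hy]
      -- the vector `v i` occurs only once in the monomial, so not in both factors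
      refine h i fun hi' => Finset.ne_of_mem_erase hj ?_
      exact (hbij m (hbad m hmb).1 i).1 (hi.trans hi'.symm)
    · rw [hy' v i _ hi, hy' w i _ hi]
  · have h0 := hS (y v)
    simp only [F] at h0
    rw [← Finset.sum_filter_add_sum_filter_not _ (fun m => pos m j₀ = fun _ => j₀),
      Finset.filter_filter, Finset.filter_filter] at h0
    have hfirst : ∑ m with (c m ≠ 0 ∧ ∀ j ∈ S, pos m j = fun _ => j) ∧ pos m j₀ = fun _ => j₀,
        c m * ∏ j ∈ Sᶜ, t (fun i => y v i (pos m j i)) = t v * F (insert j₀ S) x := by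
      simp only [F]
      rw [Finset.mul_sum]
      refine Finset.sum_congr ?_ fun m hm => ?_
      · ext m
        simp only [Finset.mem_filter, Finset.mem_univ, true_and, Finset.forall_mem_insert]
        tauto
      · simp only [Finset.mem_filter, Finset.mem_univ, true_and, Finset.forall_mem_insert] at hm
        obtain ⟨h1, h2, h3⟩ := hm
        rw [Finset.compl_insert, ← Finset.mul_prod_erase _ _ (Finset.mem_compl.2 hj₀), h2]
        have : (fun i => y v i j₀) = v := funext (hy v)
        rw [this, mul_left_comm]
        congr 2
        refine Finset.prod_congr rfl fun j hj => ?_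
        congr 1
        funext i
        refine hy' v i _ fun hi => Finset.ne_of_mem_erase hj ?_
        refine (hbij m h1 i).1 (hi.trans ?_)
        simp [h2]
    have hsecond : ∑ m ∈ bad, c m * ∏ j ∈ Sᶜ, t (fun i => y v i (pos m j i)) =
        ∑ p : {p : Fin (n + 1) → J // p 0 = j₀ ∧ p ≠ fun _ => j₀}, A p v *
          ∑ m ∈ bad with pos m (row m) = p,
            c m * ∏ j ∈ Sᶜ.erase (row m), t (fun i => y v i (pos m j i)) := by
      rw [← Finset.sum_subtype (s := Finset.univ.filter
        (fun p : Fin (n + 1) → J => p 0 = j₀ ∧ p ≠ fun _ => j₀)) (by simp)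
        (f := fun p => A p v * ∑ m ∈ bad with pos m (row m) = p,
            c m * ∏ j ∈ Sᶜ.erase (row m), t (fun i => y v i (pos m j i)))]
      rw [← Finset.sum_fiberwise_of_maps_to (g := fun m => pos m (row m)) (t := Finset.univ.filter
        (fun p : Fin (n + 1) → J => p 0 = j₀ ∧ p ≠ fun _ => j₀))]
      · refine Finset.sum_congr rfl fun p _ => ?_
        rw [Finset.mul_sum]
        refine Finset.sum_congr rfl fun m hm => ?_
        obtain ⟨hmb, rfl⟩ := Finset.mem_filter.1 hm
        rw [← Finset.mul_prod_erase _ _ (hrowS m hmb), mul_left_comm]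
      · intro m hm
        obtain ⟨h1, h2, h3⟩ := hbad m hm
        simp only [Finset.mem_filter, Finset.mem_univ, true_and]
        refine ⟨hrow m h1, fun h => h3 ?_⟩
        rwa [hdiag m h1 _ _ h] at h
    rw [hfirst] at h0
    change _ + ∑ m ∈ bad, _ = 0 at h0
    rw [hsecond] at h0
    have h1 : t v = -(F (insert j₀ S) x)⁻¹ * -(t v * F (insert j₀ S) x) := by
      field_simp
    rw [h1, neg_eq_of_add_eq_zero_right h0, Finset.mul_sum]
    refine Finset.sum_congr rfl fun p _ => ?_
    simp only [B]
    ring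

end Derivative

/-! ### Polarization of the determinant -/

section Polarization

/-- The truth value of `p` as an element of `K`; a fixed (classical) decidability instance keeps
the sums below free of instance mismatches. -/
noncomputable def indic (K : Type) [Field K] (p : Prop) : K :=
  open Classical in if p then 1 else 0

theorem indic_pos {K : Type} [Field K] {p : Prop} (h : p) : indic K p = 1 := if_pos h

theorem indic_neg {K : Type} [Field K] {p : Prop} (h : ¬p) : indic K p = 0 := if_neg h

/-- Inclusion-exclusion: the alternating sum over the sets `E` containing the range of `f` detects
surjectivity of `f`. -/
theorem sum_superset_neg_one_pow {K J : Type} [Field K] [Fintype J] [DecidableEq J] (f : J → J) :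
    ∑ E : Finset J, (-1 : K) ^ Eᶜ.card * indic K (∀ j, f j ∈ E) =
      indic K (Function.Surjective f) := by
  classical
  have h0 : ∀ E : Finset J, (-1 : K) ^ Eᶜ.card * indic K (∀ j, f j ∈ E) =
      if ∀ j, f j ∈ E then (-1 : K) ^ Eᶜ.card else 0 := fun E => by
    by_cases h : ∀ j, f j ∈ E
    · rw [indic_pos h, if_pos h, mul_one]
    · rw [indic_neg h, if_neg h, mul_zero]
  simp only [h0]
  rw [← Finset.sum_filter,
    ← Finset.sum_nbij' (s := (Finset.univ.image f)ᶜ.powerset) (f := fun E => (-1 : K) ^ E.card)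
    (fun E => Eᶜ) (fun E => Eᶜ)]
  · have h := congrArg (Int.cast : ℤ → K)
      (Finset.sum_powerset_neg_one_pow_card (x := (Finset.univ.image f)ᶜ))
    push_cast at h
    rw [h]
    have h' : (Finset.univ.image f)ᶜ = ∅ ↔ Function.Surjective f := by
      simp [Finset.compl_eq_empty_iff, Finset.eq_univ_iff_forall, Function.Surjective]
    by_cases hf : Function.Surjective f
    · rw [indic_pos hf, if_pos (h'.2 hf)]
    · rw [indic_neg hf, if_neg fun h => hf (h'.1 h)]
  · intro E hE
    simp only [Finset.mem_powerset, Finset.subset_iff, Finset.mem_compl, Finset.mem_image,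
      Finset.mem_univ, true_and, Finset.mem_filter] at hE ⊢
    exact fun j hj => hE hj ⟨j, rfl⟩
  · intro E hE
    simp only [Finset.mem_powerset, Finset.subset_iff, Finset.mem_compl, Finset.mem_image,
      Finset.mem_univ, true_and, Finset.mem_filter] at hE ⊢
    rintro _ hj ⟨a, rfl⟩
    exact hj (hE a)
  · simp
  · simp
  · simp

/-- The coefficient of a monomial in the polarized determinant. A monomial is a pair `m = (τ, h)`:
the factor of column `j` takes the vector of index `τ j` in mode `0` and the vector of index
`h j i` in mode `i + 1`. Only those pairs occur for which `h j i` has `i`-th coordinate `j i` and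
every `j ↦ h j i` is surjective; the coefficient is then the sign of `τ`. -/
noncomputable def polarCoeff (K : Type) [Field K] {n r : ℕ}
    (m : Equiv.Perm (Fin n → Fin r) × ((Fin n → Fin r) → Fin n → Fin n → Fin r)) : K :=
  ((Equiv.Perm.sign m.1 : ℤ) : K) * indic K (∀ j i, m.2 j i i = j i) *
    indic K (∀ i, Function.Surjective fun j => m.2 j i)

/-- The indices, in all `n + 1` modes, of the vectors in the `j`-th factor of the monomial `m`
(see `polarCoeff`). -/
def polarPos {n r : ℕ}
    (m : Equiv.Perm (Fin n → Fin r) × ((Fin n → Fin r) → Fin n → Fin n → Fin r))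
    (j : Fin n → Fin r) : Fin (n + 1) → Fin n → Fin r :=
  Fin.cons (m.1 j) (m.2 j)

theorem indic_forall {K : Type} [Field K] {n : ℕ} (p : Fin n → Prop) :
    indic K (∀ i, p i) = ∏ i, indic K (p i) := by
  by_cases h : ∀ i, p i
  · rw [indic_pos h, Finset.prod_eq_one fun i _ => indic_pos (h i)]
  · rw [indic_neg h]
    obtain ⟨i, hi⟩ := not_forall.1 h
    exact (Finset.prod_eq_zero (Finset.mem_univ i) (indic_neg hi)).symm

theorem sum_prod_superset_neg_one_pow {K J : Type} {n : ℕ} [Field K] [Fintype J] [DecidableEq J]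
    (h : J → Fin n → J) :
    ∑ E : Fin n → Finset J, (∏ i, (-1 : K) ^ (E i)ᶜ.card) * indic K (∀ i j, h j i ∈ E i) =
      indic K (∀ i, Function.Surjective fun j => h j i) := by
  simp only [indic_forall, ← sum_superset_neg_one_pow, ← Finset.prod_mul_distrib]
  rw [Fintype.prod_sum]

/-- If the part of a sum in which each `h m · i` takes values in `E i` vanishes for all `E`, so does
the part in which each `h m · i` is surjective. -/
theorem sum_surjective_eq_zero {K J M : Type} {n : ℕ} [Field K] [Fintype J] [Fintype M]
    [DecidableEq J] (h : M → J → Fin n → J) (s G : M → K)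
    (H : ∀ E : Fin n → Finset J,
      ∑ m, s m * indic K (∀ i j, h m j i ∈ E i) * G m = 0) :
    ∑ m, s m * indic K (∀ i, Function.Surjective fun j => h m j i) * G m = 0 := by
  have hsum : ∑ E : Fin n → Finset J, (∏ i, (-1 : K) ^ (E i)ᶜ.card) *
      ∑ m, s m * indic K (∀ i j, h m j i ∈ E i) * G m = 0 :=
    Finset.sum_eq_zero fun E _ => by rw [H, mul_zero]
  refine Eq.trans ?_ hsum
  simp only [Finset.mul_sum]
  rw [Finset.sum_comm]
  refine Finset.sum_congr rfl fun m _ => ?_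
  rw [← sum_prod_superset_neg_one_pow, Finset.mul_sum, Finset.sum_mul]
  refine Finset.sum_congr rfl fun E _ => ?_
  ring

/-- The Leibniz expansion of the determinant at `y = x 0` and `z i a = ∑ x (i + 1) l`, the sum being
over the `l ∈ E i` with `l i = a`. -/
theorem det_expansion_eq_zero {K : Type} [Field K] {n r : ℕ} {W : Fin (n + 1) → Type}
    [∀ i, AddCommGroup (W i)] [∀ i, Module K (W i)] (t : MultilinearMap K W K)
    (hdet : ∀ (y : (Fin n → Fin r) → W 0) (z : ∀ i : Fin n, Fin r → W i.succ),
      Matrix.det (Matrix.of fun (l j : Fin n → Fin r) =>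
        t (Fin.cons (y l) fun i => z i (j i))) = 0)
    (x : ∀ i, (Fin n → Fin r) → W i) (E : Fin n → Finset (Fin n → Fin r)) :
    ∑ m : Equiv.Perm (Fin n → Fin r) × ((Fin n → Fin r) → Fin n → Fin n → Fin r),
      ((Equiv.Perm.sign m.1 : ℤ) : K) * indic K (∀ j i, m.2 j i i = j i) *
        indic K (∀ i j, m.2 j i ∈ E i) *
      ∏ j, t (fun i => x i (polarPos m j i)) = 0 := by
  refine Eq.trans ?_ (hdet (x 0) fun i a => ∑ l ∈ E i with l i = a, x i.succ l)
  rw [Matrix.det_apply', Fintype.sum_prod_type]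
  refine Finset.sum_congr rfl fun τ _ => ?_
  have hexp : ∀ l j : Fin n → Fin r,
      t (Fin.cons (x 0 l) fun i : Fin n => ∑ l ∈ E i with l i = j i, x i.succ l) =
        ∑ q ∈ Fintype.piFinset fun i : Fin n => (E i).filter fun l => l i = j i,
          t (fun i => x i ((Fin.cons l q : Fin (n + 1) → Fin n → Fin r) i)) := by
    intro l j
    have := (t.curryLeft (x 0 l)).map_sum_finset (fun i l => x i.succ l)
      (fun i : Fin n => (E i).filter fun l => l i = j i)
    simp only [MultilinearMap.curryLeft_apply] at this
    rw [this]
    refine Finset.sum_congr rfl fun q _ => ?_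
    congr 1
    funext i
    refine Fin.cases ?_ (fun i => ?_) i <;> simp
  simp only [Matrix.of_apply, hexp]
  rw [Finset.prod_univ_sum, Finset.mul_sum]
  rw [← Finset.sum_subset (Finset.subset_univ (Fintype.piFinset fun j : Fin n → Fin r =>
    Fintype.piFinset fun i : Fin n => (E i).filter fun l => l i = j i))]
  · refine Finset.sum_congr rfl fun h hh => ?_
    simp only [Fintype.mem_piFinset, Finset.mem_filter] at hh
    rw [indic_pos fun j i => (hh j i).2, indic_pos fun i j => (hh j i).1, mul_one, mul_one]
    rfl
  · intro h _ hh
    simp only [Fintype.mem_piFinset, Finset.mem_filter, not_forall] at hh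
    obtain ⟨j, i, hji⟩ := hh
    rcases not_and_or.1 hji with h1 | h1
    · rw [indic_neg (p := ∀ i j, h j i ∈ E i) fun h2 => h1 (h2 i j), mul_zero, zero_mul]
    · rw [indic_neg (p := ∀ j i, h j i i = j i) fun h2 => h1 (h2 j i), mul_zero, zero_mul,
        zero_mul]

/-- If the determinant vanishes identically, so does its full polarization, in which each of the
vectors `x i l` occurs exactly once in every monomial. -/
theorem polarized_det_eq_zero {K : Type} [Field K] {n r : ℕ} {W : Fin (n + 1) → Type}
    [∀ i, AddCommGroup (W i)] [∀ i, Module K (W i)] (t : MultilinearMap K W K)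
    (hdet : ∀ (y : (Fin n → Fin r) → W 0) (z : ∀ i : Fin n, Fin r → W i.succ),
      Matrix.det (Matrix.of fun (l j : Fin n → Fin r) =>
        t (Fin.cons (y l) fun i => z i (j i))) = 0)
    (x : ∀ i, (Fin n → Fin r) → W i) :
    ∑ m, polarCoeff K m * ∏ j, t (fun i => x i (polarPos m j i)) = 0 := by
  exact sum_surjective_eq_zero Prod.snd _ _ (det_expansion_eq_zero t hdet x)

end Polarization

/-! ### Identity tensors from invertible matrices -/

section Subrank

/-- If the matrix with entries `t (y l, z 0 (j 0), …, z (n - 1) (j (n - 1)))` is invertible, then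
combinations `w a` of the `y l` can be chosen with `t (w a, z (j)) = 1` if `j` is constantly `a` and
`0` otherwise; the maps with components `w` and `z i` send `T` to the identity tensor. -/
theorem exists_restriction_of_det_ne_zero {K : Type} [Field K] {n r : ℕ}
    {V : Fin (n + 1) → Type} [∀ i, AddCommGroup (V i)] [∀ i, Module K (V i)]
    (T : ⨂[K] i, V i) (y : (Fin n → Fin r) → (V 0 →ₗ[K] K))
    (z : ∀ i : Fin n, Fin r → (V i.succ →ₗ[K] K))
    (h : Matrix.det (Matrix.of fun (l j : Fin n → Fin r) =>
        tensorForm T (Fin.cons (y l) fun i => z i (j i))) ≠ 0) :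
    ∃ g : ∀ i, V i →ₗ[K] (Fin r → K), PiTensorProduct.map g T =
      ∑ j : Fin r, PiTensorProduct.tprod K fun _ => Pi.single j (1 : K) := by
  set D := Matrix.of fun (l j : Fin n → Fin r) =>
        tensorForm T (Fin.cons (y l) fun i => z i (j i)) with hD
  let w : Fin r → (V 0 →ₗ[K] K) := fun a => ∑ l, D⁻¹ (fun _ => a) l • y l
  have hw : ∀ a j, tensorForm T (Fin.cons (w a) fun i => z i (j i)) =
      if (fun _ => a) = j then 1 else 0 := by
    intro a j
    have h1 : (D⁻¹ * D) (fun _ => a) j = if (fun _ => a) = j then 1 else 0 := by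
      rw [Matrix.nonsing_inv_mul _ (isUnit_iff_ne_zero.2 h), Matrix.one_apply]
    rw [← h1, Matrix.mul_apply, ← MultilinearMap.curryLeft_apply, map_sum]
    simp [hD]
  refine ⟨Fin.cons (LinearMap.pi w) fun i => LinearMap.pi (z i), ?_⟩
  refine tensorForm_injective (fun _ => Pi.basisFun K (Fin r)) fun α => ?_
  rw [tensorForm_map, tensorForm_sum]
  have h2 : (fun i => (Pi.basisFun K (Fin r)).coord (α i) ∘ₗ
      (Fin.cons (LinearMap.pi w) (fun i => LinearMap.pi (z i)) :
        ∀ i, V i →ₗ[K] (Fin r → K)) i) =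
      Fin.cons (w (α 0)) fun i => z i (Fin.tail α i) := by
    funext i
    refine Fin.cases ?_ (fun i => ?_) i
    · ext v; simp
    · ext v; simp [Fin.tail]
  rw [h2, hw]
  simp only [tensorForm_tprod, Basis.coord_apply, Pi.basisFun_repr, Pi.single_apply]
  rw [Finset.sum_eq_single (α 0)]
  · by_cases hα : (fun _ => α 0) = Fin.tail α
    · rw [if_pos hα]
      refine (Finset.prod_eq_one fun i _ => if_pos ?_).symm
      refine Fin.cases rfl (fun i => ?_) i
      exact (congrFun hα i).symm
    · rw [if_neg hα]
      obtain ⟨i, hi⟩ := Function.ne_iff.1 hα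
      exact (Finset.prod_eq_zero (Finset.mem_univ i.succ) (if_neg fun h => hi h.symm)).symm
  · intro b _ hb
    exact Finset.prod_eq_zero (Finset.mem_univ 0) (if_neg hb.symm)
  · simp

end Subrank

/-! ### The partition rank of diagonal tensors -/

section LowerBound

/-- Among the vectors supported on `B` and orthogonal to given vectors `φ s`, some one vanishes
at no more points of `B` than there are `φ s`; any one with maximal support does. -/
theorem exists_orthogonal_large_support {K A ι : Type} [Field K] [Fintype A] [Fintype ι]
    (φ : ι → A → K) (B : Finset A) :
    ∃ w : A → K, (∀ s, ∑ a, w a * φ s a = 0) ∧ (∀ a ∉ B, w a = 0) ∧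
      B.card ≤ {a | w a ≠ 0}.ncard + Fintype.card ι := by
  classical
  let good : Finset (Finset A) := Finset.univ.filter fun S => ∃ w : A → K,
    (∀ s, ∑ a, w a * φ s a = 0) ∧ (∀ a ∉ B, w a = 0) ∧ ∀ a, a ∈ S ↔ w a ≠ 0
  have hne : good.Nonempty := ⟨∅, by
    simp only [good, Finset.mem_filter, Finset.mem_univ, true_and]
    exact ⟨0, by simp, by simp, by simp⟩⟩
  obtain ⟨S, hS, hmax⟩ := Finset.exists_max_image good Finset.card hne
  simp only [good, Finset.mem_filter, Finset.mem_univ, true_and] at hS hmax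
  obtain ⟨w, hw1, hw2, hw3⟩ := hS
  refine ⟨w, hw1, hw2, ?_⟩
  have hcard : {a | w a ≠ 0}.ncard = S.card := by
    rw [← Set.ncard_coe_finset]
    congr 1
    ext a
    simp [hw3]
  rw [hcard]
  by_contra! hlt
  have hSB : S ⊆ B := fun a ha => by
    by_contra h
    exact (hw3 a).1 ha (hw2 a h)
  -- a nonzero orthogonal vector supported on `B \ S` would enlarge the support of `w`
  let L : ({a // a ∈ B \ S} → K) →ₗ[K] (ι → K) :=
    LinearMap.pi fun s => ∑ a : {a // a ∈ B \ S},
      φ s a • (LinearMap.proj a : ({a // a ∈ B \ S} → K) →ₗ[K] K)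
  have hker : LinearMap.ker L ≠ ⊥ := by
    refine LinearMap.ker_ne_bot_of_finrank_lt ?_
    simp only [Module.finrank_fintype_fun_eq_card, Fintype.card_coe]
    rw [Finset.card_sdiff_of_subset hSB]
    omega
  obtain ⟨u, hu, hu0⟩ := (Submodule.ne_bot_iff _).1 hker
  let u' : A → K := fun a => if h : a ∈ B \ S then u ⟨a, h⟩ else 0
  have hu' : ∀ s, ∑ a, u' a * φ s a = 0 := by
    intro s
    have h1 := congrFun (LinearMap.mem_ker.1 hu) s
    simp only [L, LinearMap.pi_apply, LinearMap.sum_apply, LinearMap.smul_apply,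
      LinearMap.proj_apply, smul_eq_mul, Pi.zero_apply] at h1
    rw [← h1, ← Finset.sum_subset (Finset.subset_univ (B \ S))]
    · rw [← Finset.sum_coe_sort]
      refine Finset.sum_congr rfl fun a _ => ?_
      have := a.2
      simp only [u', dif_pos this, mul_comm]
    · intro a _ ha
      simp only [u', dif_neg ha, zero_mul]
  obtain ⟨a₀, ha₀⟩ := Function.ne_iff.1 hu0
  have hS0 : ∀ a ∈ S, u' a = 0 := fun a ha => by simp [u', ha]
  have hw0 : ∀ a ∉ S, w a = 0 := fun a ha => by
    by_contra h
    exact ha ((hw3 a).2 h)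
  have hbig := hmax (Finset.univ.filter fun a => w a + u' a ≠ 0) ⟨fun a => w a + u' a, ?_, ?_, ?_⟩
  · refine absurd hbig (not_le.2 (Finset.card_lt_card ?_))
    refine (Finset.ssubset_iff_of_subset fun a ha => ?_).2 ⟨a₀, ?_, (Finset.mem_sdiff.1 a₀.2).2⟩
    · simp [hS0 a ha, (hw3 a).1 ha]
    · have := (Finset.mem_sdiff.1 a₀.2).2
      simp only [Finset.mem_filter, Finset.mem_univ, true_and, hw0 _ this, zero_add, u',
        dif_pos a₀.2]
      exact ha₀
  · intro s
    simp only [add_mul, Finset.sum_add_distrib, hw1, hu', add_zero]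
  · intro a ha
    simp [hw2 a ha, u', ha]
  · simp

/-- An array `F` of order `k` that is a product of two arrays in complementary nonempty groups of
indices: the coordinate version of `IsPartitionRankOne`. -/
def IsSplit {K A : Type} [Field K] {k : ℕ} (F : (Fin k → A) → K) : Prop :=
  ∃ P : Finset (Fin k), P.Nonempty ∧ P ≠ Finset.univ ∧ ∃ f g : (Fin k → A) → K,
    (∀ α β : Fin k → A, (∀ i ∈ P, α i = β i) → f α = f β) ∧
    (∀ α β : Fin k → A, (∀ i ∉ P, α i = β i) → g α = g β) ∧ ∀ α, F α = f α * g α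

/-- Either `F` splits off its first index alone, or all contractions of `F` in this index still
split. -/
theorem IsSplit.contract {K A : Type} [Field K] [Fintype A] {k : ℕ}
    {F : (Fin (k + 2) → A) → K} (hF : IsSplit F) :
    (∃ (φ : A → K) (ψ : (Fin (k + 1) → A) → K), ∀ a x, F (Fin.cons a x) = φ a * ψ x) ∨
      ∀ w : A → K, IsSplit fun x : Fin (k + 1) → A => ∑ a, w a * F (Fin.cons a x) := by
  classical
  -- by symmetry the distinguished coordinate `0` may be assumed to lie in the set `P`
  obtain ⟨P, hP0, hP1, f, g, hf, hg, h⟩ : ∃ P : Finset (Fin (k + 2)), 0 ∈ P ∧ P ≠ Finset.univ ∧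
      ∃ f g : (Fin (k + 2) → A) → K,
      (∀ α β : Fin (k + 2) → A, (∀ i ∈ P, α i = β i) → f α = f β) ∧
      (∀ α β : Fin (k + 2) → A, (∀ i ∉ P, α i = β i) → g α = g β) ∧ ∀ α, F α = f α * g α := by
    obtain ⟨P, hP, hP', f, g, hf, hg, h⟩ := hF
    by_cases h0 : 0 ∈ P
    · exact ⟨P, h0, hP', f, g, hf, hg, h⟩
    · refine ⟨Pᶜ, by simpa using h0, fun h => hP.ne_empty ?_, g, f, ?_, ?_, fun α => ?_⟩
      · simpa using h
      · simpa using hg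
      · simpa using hf
      · rw [h, mul_comm]
  rcases isEmpty_or_nonempty A with hA | ⟨⟨a₀⟩⟩
  · exact Or.inl ⟨0, 0, fun a => isEmptyElim a⟩
  by_cases hP : P = {0}
  · left
    refine ⟨fun a => f (Fin.cons a fun _ => a₀), fun x => g (Fin.cons a₀ x), fun a x => ?_⟩
    rw [h]
    congr 1
    · refine hf _ _ fun i hi => ?_
      rw [hP, Finset.mem_singleton] at hi
      rw [hi, Fin.cons_zero, Fin.cons_zero]
    · refine hg _ _ fun i hi => ?_
      refine Fin.cases (fun hi => ?_) (fun i _ => rfl) i hi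
      exact absurd hP0 hi
  · right
    intro w
    refine ⟨P.preimage Fin.succ (Fin.succ_injective _).injOn, ?_, ?_,
      fun x => ∑ a, w a * f (Fin.cons a x), fun x => g (Fin.cons a₀ x), ?_, ?_, ?_⟩
    · obtain ⟨i, hi, hi0⟩ : ∃ i ∈ P, i ≠ 0 := by
        by_contra! hc
        exact hP (Finset.eq_singleton_iff_unique_mem.2 ⟨hP0, hc⟩)
      obtain ⟨i, rfl⟩ := Fin.exists_succ_eq.2 hi0
      exact ⟨i, by simpa using hi⟩
    · intro hc
      refine hP1 (Finset.eq_univ_iff_forall.2 fun i => ?_)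
      refine Fin.cases hP0 (fun i => ?_) i
      have := Finset.mem_univ i
      rw [← hc] at this
      simpa using this
    · intro α β hαβ
      refine Finset.sum_congr rfl fun a _ => ?_
      congr 1
      refine hf _ _ fun i => Fin.cases (fun _ => rfl) (fun i hi => ?_) i
      simpa using hαβ i (by simpa using hi)
    · intro α β hαβ
      refine hg _ _ fun i => Fin.cases (fun _ => rfl) (fun i hi => ?_) i
      simpa using hαβ i (by simpa using hi)
    · intro x
      rw [Finset.sum_mul]
      refine Finset.sum_congr rfl fun a _ => ?_
      rw [h, mul_assoc]
      congr 2
      refine hg _ _ fun i => Fin.cases (fun hi => absurd hP0 hi) (fun i _ => rfl) i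

/-- A diagonal array with entries `h a` that is a sum of split arrays has at most as many nonzero
entries as there are summands. In order `1` no array splits, so the sum is empty. -/
theorem card_support_le_of_diagonal {K A : Type} [Field K] [Fintype A] [DecidableEq A] (k : ℕ) :
    ∀ (h : A → K) (ι : Type) [Fintype ι] (F : ι → (Fin (k + 1) → A) → K),
      (∀ s, IsSplit (F s)) →
      (∀ α, ∑ a, h a * ∏ i, (if α i = a then 1 else 0) = ∑ s, F s α) →
      {a | h a ≠ 0}.ncard ≤ Fintype.card ι := by
  classical
  induction k with
  | zero =>
    intro h ι _ F hF hsum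
    have hι : IsEmpty ι := ⟨fun s => by
      obtain ⟨P, ⟨i, hi⟩, hP, -⟩ := hF s
      refine hP (Finset.eq_univ_iff_forall.2 fun j => ?_)
      rwa [Subsingleton.elim (α := Fin 1) j i]⟩
    have h0 : ∀ a, h a = 0 := fun a => by simpa using hsum fun _ => a
    simp [h0]
  | succ k ih =>
    intro h ι _ F hF hsum
    -- the terms that split off index `0` alone are killed by contraction with `w`
    let slice : ι → Prop := fun s =>
      ∃ (φ : A → K) (ψ : (Fin (k + 1) → A) → K), ∀ a x, F s (Fin.cons a x) = φ a * ψ x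
    have hslice : ∀ s : {s // slice s}, slice s := fun s => s.2
    choose φ ψ hφ using hslice
    obtain ⟨w, hw1, hw2, hw3⟩ := exists_orthogonal_large_support φ
      (Finset.univ.filter fun a => h a ≠ 0)
    have hle := ih (fun a => w a * h a) {s // ¬slice s}
      (fun s x => ∑ a, w a * F s (Fin.cons a x))
      (fun s => ((hF s).contract.resolve_left s.2) w) ?_
    · have hsupp : {a | w a * h a ≠ 0} = {a | w a ≠ 0} := by
        ext a
        have := hw2 a
        simp only [Finset.mem_filter, Finset.mem_univ, true_and, not_not] at this
        simp only [Set.mem_ofPred_eq, ne_eq, mul_eq_zero, not_or]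
        tauto
      rw [hsupp] at hle
      have hB : {a | h a ≠ 0}.ncard = (Finset.univ.filter fun a => h a ≠ 0).card := by
        rw [← Set.ncard_coe_finset]
        simp
      have hc := Fintype.card_subtype_compl slice
      have hc' := Fintype.card_subtype_le slice
      omega
    · intro x
      have h1 : ∀ b, ∑ a, h a *
          ∏ i, (if (Fin.cons b x : Fin (k + 2) → A) i = a then (1 : K) else 0) =
          h b * ∏ i, (if x i = b then 1 else 0) := by
        intro b
        simp only [Fin.prod_univ_succ (n := k + 1), Fin.cons_zero, Fin.cons_succ]
        rw [Finset.sum_eq_single b]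
        · simp
        · intro a _ hab
          simp [hab.symm]
        · simp
      calc ∑ a, w a * h a * ∏ i, (if x i = a then 1 else 0)
          = ∑ a, w a * ∑ s, F s (Fin.cons a x) := by
            refine Finset.sum_congr rfl fun a _ => ?_
            rw [← hsum, h1, mul_assoc]
        _ = ∑ s, ∑ a, w a * F s (Fin.cons a x) := by
            simp only [Finset.mul_sum]
            exact Finset.sum_comm
        _ = _ := by
            rw [← Fintype.sum_subtype_add_sum_subtype slice, add_eq_right]
            refine Finset.sum_eq_zero fun s _ => ?_
            simp only [hφ, ← mul_assoc, ← Finset.sum_mul, hw1, zero_mul]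

theorem IsPartitionRankOne.isSplit {K A : Type} [Field K] {k : ℕ} {V : Fin k → Type}
    [∀ i, AddCommGroup (V i)] [∀ i, Module K (V i)] {T : ⨂[K] i, V i}
    (hT : IsPartitionRankOne T) (φ : ∀ i, A → (V i →ₗ[K] K)) :
    IsSplit fun α : Fin k → A => tensorForm T fun i => φ i (α i) := by
  classical
  obtain ⟨P, hP, hP', a, b, x, y, rfl⟩ := hT
  refine ⟨P, hP, hP', fun α => ∑ s, ∏ i ∈ P, φ i (α i) (x s i),
    fun α => ∑ s, ∏ i ∈ Pᶜ, φ i (α i) (y s i), ?_, ?_, ?_⟩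
  · intro α β h
    exact Finset.sum_congr rfl fun s _ => Finset.prod_congr rfl fun i hi => by rw [h i hi]
  · intro α β h
    exact Finset.sum_congr rfl fun s _ => Finset.prod_congr rfl fun i hi => by
      rw [h i (Finset.mem_compl.1 hi)]
  · intro α
    rw [Finset.sum_mul_sum]
    simp only [tensorForm_sum, tensorForm_tprod]
    refine Finset.sum_congr rfl fun s _ => Finset.sum_congr rfl fun t _ => ?_
    rw [← Finset.prod_mul_prod_compl P]
    congr 1
    · exact Finset.prod_congr rfl fun i hi => by rw [if_pos hi]
    · exact Finset.prod_congr rfl fun i hi => by rw [if_neg (Finset.mem_compl.1 hi)]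

theorem le_tensorPartitionRank_of_restriction {K : Type} [Field K] {k r : ℕ} (hk : 2 ≤ k)
    {V : Fin k → Type} [∀ i, AddCommGroup (V i)] [∀ i, Module K (V i)] {T : ⨂[K] i, V i}
    (g : ∀ i, V i →ₗ[K] (Fin r → K)) (hg : PiTensorProduct.map g T =
      ∑ j : Fin r, PiTensorProduct.tprod K fun _ => Pi.single j (1 : K)) :
    r ≤ tensorPartitionRank T := by
  refine le_csInf (exists_partitionRank_decomposition hk T) ?_
  rintro m ⟨c, hc, hT⟩
  obtain ⟨k, rfl⟩ : ∃ l, k = l + 1 := ⟨k - 1, by omega⟩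
  have h := card_support_le_of_diagonal (K := K) k (fun _ : Fin r => 1) (Fin m)
    (fun s α => tensorForm (c s) fun i => (Pi.basisFun K (Fin r)).coord (α i) ∘ₗ g i)
    (fun s => (hc s).isSplit fun i a => (Pi.basisFun K (Fin r)).coord a ∘ₗ g i) ?_
  · simpa using h
  · intro α
    rw [← tensorForm_sum, ← hT, ← tensorForm_map, hg, tensorForm_sum]
    simp [Pi.single_apply]

end LowerBound

/-! ### The upper bound -/

section UpperBound

/-- If the identity tensor of size `r` is not a restriction of `T`, then `T` has partition rank less
than `r ^ n ^ 2`: the determinant of `exists_restriction_of_det_ne_zero` vanishes identically, and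
`exists_split_of_vanishing` applies to its polarization. -/
theorem tensorPartitionRank_lt_of_no_restriction {K : Type} [Field K] {n r : ℕ}
    {V : Fin (n + 1) → Type} [∀ i, AddCommGroup (V i)] [∀ i, Module K (V i)]
    [∀ i, FiniteDimensional K (V i)] (T : ⨂[K] i, V i)
    (hT : ¬∃ g : ∀ i, V i →ₗ[K] (Fin r → K), PiTensorProduct.map g T =
      ∑ j : Fin r, PiTensorProduct.tprod K fun _ => Pi.single j (1 : K)) :
    tensorPartitionRank T < r ^ n ^ 2 := by
  classical
  have hdet : ∀ (y : (Fin n → Fin r) → (V 0 →ₗ[K] K))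
      (z : ∀ i : Fin n, Fin r → (V i.succ →ₗ[K] K)),
      Matrix.det (Matrix.of fun (l j : Fin n → Fin r) =>
        tensorForm T (Fin.cons (y l) fun i => z i (j i))) = 0 := fun y z => by
    by_contra h
    exact hT (exists_restriction_of_det_ne_zero T y z h)
  have hcoeff : ∀ m : Equiv.Perm (Fin n → Fin r) × ((Fin n → Fin r) → Fin n → Fin n → Fin r),
      polarCoeff K m ≠ 0 → (∀ j i, m.2 j i i = j i) ∧
        ∀ i, Function.Surjective fun j => m.2 j i := by
    intro m hm
    constructor <;> by_contra h <;> exact hm (by simp [polarCoeff, indic_neg h])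
  obtain ⟨j₀, A, B, hA, hB, hAB⟩ := exists_split_of_vanishing (tensorForm T)
    polarPos (polarCoeff K)
    (by
      intro m hm i
      refine Fin.cases ?_ (fun i => ?_) i
      · exact m.1.bijective
      · exact Finite.injective_iff_bijective.1 (Finite.injective_iff_surjective.2
          ((hcoeff m hm).2 i)))
    (by
      intro m hm j j₀ h
      funext i
      rw [← (hcoeff m hm).1 j i]
      exact congrFun (congrFun h i.succ) i)
    (by
      -- the identity monomial is the only fully diagonal one, with coefficient `1`
      have h1 : (Finset.univ.filter fun m : Equiv.Perm (Fin n → Fin r) ×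
          ((Fin n → Fin r) → Fin n → Fin n → Fin r) => ∀ j, polarPos m j = fun _ => j) =
          {(1, fun j _ => j)} := by
        ext m
        simp only [Finset.mem_filter, Finset.mem_univ, true_and, Finset.mem_singleton]
        constructor
        · intro h
          refine Prod.ext (Equiv.ext fun j => congrFun (h j) 0) ?_
          funext j i
          exact congrFun (h j) i.succ
        · rintro rfl j
          funext i
          refine Fin.cases rfl (fun i => rfl) i
      rw [h1, Finset.sum_singleton, polarCoeff,
        indic_pos (p := ∀ j i, (fun j _ => j : (Fin n → Fin r) → Fin n → Fin n → Fin r) j i i = j i)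
          fun _ _ => rfl,
        indic_pos (p := ∀ i : Fin n, Function.Surjective fun j =>
          (fun j _ => j : (Fin n → Fin r) → Fin n → Fin n → Fin r) j i) fun _ j => ⟨j, rfl⟩]
      simp)
    (polarized_det_eq_zero (tensorForm T) hdet) ⟨fun _ _ => 0⟩
  have hle : tensorPartitionRank T ≤
      Fintype.card {p : Fin (n + 1) → Fin n → Fin r // p 0 = j₀ ∧ p ≠ fun _ => j₀} := by
    let b := fun i => Module.finBasis K (V i)
    refine tensorPartitionRank_le_card (fun p : {p : Fin (n + 1) → Fin n → Fin r //
        p 0 = j₀ ∧ p ≠ fun _ => j₀} => ∑ α : ∀ i, Fin (Module.finrank K (V i)),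
      (A p (fun i => (b i).coord (α i)) * B p (fun i => (b i).coord (α i))) •
        PiTensorProduct.tprod K fun i => b i (α i)) (fun p => ?_) ?_
    · refine isPartitionRankOne_of_split (fun i => b i)
        (Finset.univ.filter fun i => p.1 i = j₀) ⟨0, by simp [p.2.1]⟩ ?_
        (fun α => A p fun i => (b i).coord (α i)) (fun α => B p fun i => (b i).coord (α i)) ?_ ?_
      · intro h
        refine p.2.2 (funext fun i => ?_)
        have := Finset.mem_univ i
        rw [← h] at this
        simpa using this
      · intro α β h
        exact hA _ _ _ fun i hi => by rw [h i (by simpa using hi)]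
      · intro α β h
        exact hB _ _ _ fun i hi => by rw [h i (by simpa using hi)]
    · conv_lhs => rw [eq_sum_tensorForm b T]
      rw [Finset.sum_comm]
      refine Finset.sum_congr rfl fun α _ => ?_
      rw [hAB, Finset.sum_smul]
  refine hle.trans_lt ?_
  -- the positions `p` embed in `Fin n → J` by dropping `p 0 = j₀`, missing the constant `j₀`
  have hcard : Fintype.card (Fin n → Fin n → Fin r) = r ^ n ^ 2 := by
    simp [← pow_mul, sq]
  rw [← hcard]
  refine Fintype.card_lt_of_injective_of_notMem (fun p => Fin.tail p.1) ?_ (b := fun _ => j₀) ?_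
  · intro p q h
    refine Subtype.ext ?_
    rw [← Fin.cons_self_tail p.1, ← Fin.cons_self_tail q.1, p.2.1, q.2.1]
    simp only at h
    rw [h]
  · rintro ⟨p, hp⟩
    refine p.2.2 (funext fun i => ?_)
    refine Fin.cases p.2.1 (fun i => ?_) i
    exact congrFun hp i

end UpperBound

/-- **Subrank vs. partition rank.**  For every order `k ≥ 2` there is a constant
`C = C(k) > 0` such that for every field `K` and every tensor `T ∈ V₁ ⊗ ⋯ ⊗ V_k` of
finite-dimensional `K`-vector spaces, `Q(T) ≤ PR(T) ≤ C·Q(T)^{(k-1)²}`. -/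
theorem subrank_vs_partitionRank (k : ℕ) (hk : 2 ≤ k) :
    ∃ C : ℕ, 0 < C ∧
      ∀ (K : Type) [Field K] (V : Fin k → Type)
        [∀ i, AddCommGroup (V i)] [∀ i, Module K (V i)] [∀ i, FiniteDimensional K (V i)]
        (T : ⨂[K] i, V i),
        subrank T ≤ tensorPartitionRank T ∧
          tensorPartitionRank T ≤ C * subrank T ^ (k - 1) ^ 2 := by
  refine ⟨2 ^ (k - 1) ^ 2, by positivity, ?_⟩
  intro K _ V _ _ _ T
  have hbound : ∀ r ∈ {r : ℕ | ∃ g : ∀ i, V i →ₗ[K] (Fin r → K), PiTensorProduct.map g T =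
      ∑ j : Fin r, PiTensorProduct.tprod K fun _ => Pi.single j (1 : K)},
      r ≤ tensorPartitionRank T := by
    rintro r ⟨g, hg⟩
    exact le_tensorPartitionRank_of_restriction hk g hg
  refine ⟨csSup_le' hbound, ?_⟩
  -- `hbound` makes the supremum defining `subrank` a genuine maximum
  have hmax : ¬∃ g : ∀ i, V i →ₗ[K] (Fin (subrank T + 1) → K), PiTensorProduct.map g T =
      ∑ j : Fin (subrank T + 1), PiTensorProduct.tprod K fun _ => Pi.single j (1 : K) := by
    intro h
    have : subrank T + 1 ≤ subrank T := le_csSup ⟨_, hbound⟩ h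
    omega
  generalize subrank T = Q at hmax
  obtain ⟨n, rfl⟩ : ∃ n, k = n + 1 := ⟨k - 1, by omega⟩
  have hlt := tensorPartitionRank_lt_of_no_restriction T hmax
  simp only [Nat.add_sub_cancel]
  rcases Nat.eq_zero_or_pos Q with rfl | hQ
  -- for `Q = 0` the strict inequality is needed: the partition rank is less than `1`
  · rw [zero_add, one_pow, Nat.lt_one_iff] at hlt
    rw [hlt]
    exact Nat.zero_le _
  · refine hlt.le.trans ?_
    rw [← mul_pow]
    exact Nat.pow_le_pow_left (by omega) _
end
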